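/- For every integer n ≥ 1, over PA⁻ + IΣn the following four statements are pairwise equivalent: GPHP(Σ_{n+1}), FRT^1(Σ_{n+1}), fairFRT^1(Σ_{n+1}), and FRT^1_2(Σ_{n+1}). -/

import Mathlib

/- Shared development: first-order arithmetic in the language {0,1,+,·,<},
   the arithmetic hierarchy, fragments of arithmetic, and coded finite
   combinatorics inside models. -/

open FirstOrder Language

namespace ArithFC

/-- Function symbols of the language of arithmetic: 0, 1, +, ·. -/
inductive Func : ℕ → Type
  | zero : Func 0
  | one : Func 0
  | add : Func 2
  | mul : Func 2

/-- Relation symbols of the language of arithmetic: <. -/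
inductive Rel : ℕ → Type
  | lt : Rel 2

/-- The first-order language {0, 1, +, ·, <}. -/
def lang : Language :=
  { Functions := Func, Relations := Rel }

section Instances

variable (M : Type) [lang.Structure M]

instance : Zero M := ⟨Structure.funMap (L := lang) Func.zero ![]⟩
instance : One M := ⟨Structure.funMap (L := lang) Func.one ![]⟩
instance : Add M := ⟨fun x y => Structure.funMap (L := lang) Func.add ![x, y]⟩
instance : Mul M := ⟨fun x y => Structure.funMap (L := lang) Func.mul ![x, y]⟩
instance : LT M := ⟨fun x y => Structure.RelMap (L := lang) Rel.lt ![x, y]⟩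
instance : LE M := ⟨fun x y => x < y ∨ x = y⟩

end Instances

/-- The numeral `n` in a model. -/
def numM (M : Type) [lang.Structure M] : ℕ → M
  | 0 => 0
  | n + 1 => numM M n + 1

/-- `b` is nonstandard (greater than every numeral). -/
def Nonstd {M : Type} [lang.Structure M] (b : M) : Prop := ∀ n : ℕ, numM M n < b

/-- The atomic formula `t < u`. -/
def ltFm {α : Type} {n : ℕ} (t u : lang.Term (α ⊕ Fin n)) : lang.BoundedFormula α n :=
  BoundedFormula.rel (Rel.lt : lang.Relations 2) ![t, u]

/-- Δ₀ formulas: built from atomic formulas by boolean connectives and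
bounded universal quantification (this generates, up to logical equivalence,
the usual class of bounded formulas). -/
inductive IsDelta0 {α : Type} : ∀ n : ℕ, lang.BoundedFormula α n → Prop
  | falsum (n : ℕ) : IsDelta0 n BoundedFormula.falsum
  | equal (n : ℕ) (t u : lang.Term (α ⊕ Fin n)) : IsDelta0 n (BoundedFormula.equal t u)
  | rel (n l : ℕ) (R : lang.Relations l) (ts : Fin l → lang.Term (α ⊕ Fin n)) :
      IsDelta0 n (BoundedFormula.rel R ts)
  | imp (n : ℕ) {φ ψ : lang.BoundedFormula α n} :
      IsDelta0 n φ → IsDelta0 n ψ → IsDelta0 n (φ.imp ψ)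
  | bdAll (n : ℕ) (t : lang.Term (α ⊕ Fin n)) {φ : lang.BoundedFormula α (n + 1)} :
      IsDelta0 (n + 1) φ →
      IsDelta0 n
        (BoundedFormula.all ((ltFm (Term.var (Sum.inr (Fin.last n))) (t.liftAt 1 n)).imp φ))

mutual
  /-- Σ_m formulas. -/
  inductive SigmaFm {α : Type} : ℕ → ∀ n : ℕ, lang.BoundedFormula α n → Prop
    | delta0 (m n : ℕ) {φ : lang.BoundedFormula α n} : IsDelta0 n φ → SigmaFm m n φ
    | ofPi (m n : ℕ) {φ : lang.BoundedFormula α n} : PiFm m n φ → SigmaFm (m + 1) n φ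
    | ex (m n : ℕ) {φ : lang.BoundedFormula α (n + 1)} :
        SigmaFm (m + 1) (n + 1) φ → SigmaFm (m + 1) n φ.ex
  /-- Π_m formulas. -/
  inductive PiFm {α : Type} : ℕ → ∀ n : ℕ, lang.BoundedFormula α n → Prop
    | delta0 (m n : ℕ) {φ : lang.BoundedFormula α n} : IsDelta0 n φ → PiFm m n φ
    | ofSigma (m n : ℕ) {φ : lang.BoundedFormula α n} : SigmaFm m n φ → PiFm (m + 1) n φ
    | all (m n : ℕ) {φ : lang.BoundedFormula α (n + 1)} :
        PiFm (m + 1) (n + 1) φ → PiFm (m + 1) n φ.all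
end

/-- A `k`-ary relation on `M` is Σ_m-definable (with parameters from `M`). -/
def IsSigmaDef (m : ℕ) (M : Type) [lang.Structure M] {k : ℕ} (R : (Fin k → M) → Prop) : Prop :=
  ∃ (p : ℕ) (φ : lang.BoundedFormula (Fin k ⊕ Fin p) 0) (w : Fin p → M),
    SigmaFm m 0 φ ∧ ∀ v : Fin k → M, R v ↔ φ.Realize (Sum.elim v w) finZeroElim

/-- A subset of `M` is Σ_m-definable with parameters. -/
def SigmaDef1 (m : ℕ) (M : Type) [lang.Structure M] (A : Set M) : Prop :=
  IsSigmaDef m M (k := 1) fun v => v 0 ∈ A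

/-- A binary relation on `M` is Σ_m-definable with parameters. -/
def SigmaDef2 (m : ℕ) (M : Type) [lang.Structure M] (R : M → M → Prop) : Prop :=
  IsSigmaDef m M (k := 2) fun v => R (v 0) (v 1)

/-- A ternary relation on `M` is Σ_m-definable with parameters. -/
def SigmaDef3 (m : ℕ) (M : Type) [lang.Structure M] (R : M → M → M → Prop) : Prop :=
  IsSigmaDef m M (k := 3) fun v => R (v 0) (v 1) (v 2)

/-- `M` is a model of PA⁻ (the nonnegative part of a discretely ordered
commutative semiring). -/
structure PAm (M : Type) [lang.Structure M] : Prop where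
  add_assoc : ∀ x y z : M, x + y + z = x + (y + z)
  add_comm : ∀ x y : M, x + y = y + x
  mul_assoc : ∀ x y z : M, x * y * z = x * (y * z)
  mul_comm : ∀ x y : M, x * y = y * x
  ldistrib : ∀ x y z : M, x * (y + z) = x * y + x * z
  add_zero : ∀ x : M, x + 0 = x
  mul_zero : ∀ x : M, x * 0 = 0
  mul_one : ∀ x : M, x * 1 = x
  lt_trans : ∀ x y z : M, x < y → y < z → x < z
  lt_irrefl : ∀ x : M, ¬x < x
  lt_total : ∀ x y : M, x < y ∨ x = y ∨ y < x
  add_lt_add : ∀ x y z : M, x < y → x + z < y + z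
  mul_lt_mul : ∀ x y z : M, x < y → 0 < z → x * z < y * z
  sub_exists : ∀ x y : M, x < y → ∃ z, x + z = y
  zero_lt_one : (0 : M) < 1
  discrete : ∀ x : M, 0 < x → (1 : M) ≤ x
  zero_le : ∀ x : M, (0 : M) ≤ x

/-- `M` satisfies the Σ_m-induction scheme (with parameters). -/
def ISig (m : ℕ) (M : Type) [lang.Structure M] : Prop :=
  ∀ A : Set M, SigmaDef1 m M A → (0 : M) ∈ A → (∀ x, x ∈ A → x + 1 ∈ A) → ∀ x, x ∈ A

/-- `M` satisfies the Σ_m-collection (bounding) scheme (with parameters). -/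
def BSig (m : ℕ) (M : Type) [lang.Structure M] : Prop :=
  ∀ R : M → M → Prop, SigmaDef2 m M R → ∀ a : M,
    (∀ x, x < a → ∃ y, R x y) → ∃ b, ∀ x, x < a → ∃ y, y < b ∧ R x y

section Coding

variable {M : Type} [lang.Structure M]

/-- `z` is the Cantor pair `⟨x, y⟩`: `2z = (x+y)(x+y+1) + 2y`. -/
def IsPairC (z x y : M) : Prop := z + z = (x + y) * (x + y + 1) + (y + y)

/-- Gödel's β-function: `x = a mod ((i+1)·b + 1)`. -/
def BetaC (a b i x : M) : Prop :=
  x < (i + 1) * b + 1 ∧ ∃ q, a = q * ((i + 1) * b + 1) + x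

/-- The sequence coded by `s` (via a Cantor pair of β-function data) has value `x`
at place `i`. -/
def SeqAt (s i x : M) : Prop := ∃ a b, IsPairC s a b ∧ BetaC a b i x

/-- `c` codes the M-finite set `X` of cardinality `card`: `c = ⟨card, s⟩` where `s`
codes the strictly increasing enumeration of `X` of length `card`. -/
def CodesFinset (c : M) (X : Set M) (card : M) : Prop :=
  ∃ s, IsPairC c card s ∧
    (∀ i, i < card → ∃ x, x ∈ X ∧ SeqAt s i x) ∧
    (∀ i j x y, i < j → j < card → SeqAt s i x → SeqAt s j y → x < y) ∧
    (∀ x, x ∈ X ↔ ∃ i, i < card ∧ SeqAt s i x)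

/-- `X` is an M-finite (coded) set. -/
def MFinite (X : Set M) : Prop := ∃ c card : M, CodesFinset c X card

/-- `d` codes an `e`-element subset `D` of `[0, y)`, i.e. an element of `[y]^e`. -/
def CodesTupleIn (d e y : M) (D : Set M) : Prop :=
  CodesFinset d D e ∧ ∀ z ∈ D, z < y

/-- `f` codes a (finite) function defined on all of `[0, a)`. -/
def CodesFunOn (f a : M) : Prop :=
  ∀ x, x < a → (∃ y, SeqAt f x y) ∧ ∀ y y', SeqAt f x y → SeqAt f x y' → y = y'

/-- `X` is an M-coded subset of `[0, a)`. -/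
def MCodedSubset (a : M) (X : Set M) : Prop :=
  MFinite X ∧ ∀ x ∈ X, x < a

end Coding

/-- An `M`-ultrafilter on `a`: an ultrafilter of the Boolean algebra of
M-finite subsets of `[0, a)`. -/
structure MUltra (M : Type) [lang.Structure M] (a : M) where
  sets : Set (Set M)
  mem_coded : ∀ X ∈ sets, MCodedSubset a X
  univ_mem : {x : M | x < a} ∈ sets
  superset_mem : ∀ X Y : Set M, X ∈ sets → MCodedSubset a Y → X ⊆ Y → Y ∈ sets
  inter_mem : ∀ X Y : Set M, X ∈ sets → Y ∈ sets → X ∩ Y ∈ sets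
  empty_not_mem : (∅ : Set M) ∉ sets
  ultra : ∀ X : Set M, MCodedSubset a X → X ∈ sets ∨ {x : M | x < a ∧ x ∉ X} ∈ sets

section Principles

variable (M : Type) [lang.Structure M]

/-- `F` is (the graph of) a Σ_m-definable injection from `[0, y)` into `[0, x)`. -/
def SigmaInjRel (m : ℕ) (F : M → M → Prop) (y x : M) : Prop :=
  SigmaDef2 m M F ∧
    (∀ u, u < y → ∃ v, v < x ∧ F u v) ∧
    (∀ u v v', u < y → F u v → F u v' → v = v') ∧
    (∀ u u' v, u < y → u' < y → F u v → F u' v → u = u')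

/-- There exists a Σ_m-definable injection from `[0, y)` into `[0, x)`. -/
def ExSigmaInj (m : ℕ) (y x : M) : Prop := ∃ F : M → M → Prop, SigmaInjRel M m F y x

/-- There exists a Σ_m-definable injection from all of `M` into `[0, a)`. -/
def SigmaInjWhole (m : ℕ) (a : M) : Prop :=
  ∃ F : M → M → Prop, SigmaDef2 m M F ∧
    (∀ u, ∃ v, v < a ∧ F u v) ∧
    (∀ u v v', F u v → F u v' → v = v') ∧
    (∀ u u' v, F u v → F u' v → u = u')

/-- CARD(Σ_m): no Σ_m-definable multivalued map sends `M` injectively below `a`. -/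
def CARD (m : ℕ) : Prop :=
  ∀ F : M → M → Prop, SigmaDef2 m M F → ∀ a : M,
    (∀ x, ∃ y, y < a ∧ F x y) →
      ∃ x0 x1 y, x0 ≠ x1 ∧ y < a ∧ F x0 y ∧ F x1 y

/-- GPHP(Σ_m): for every `x` there is `y` with no Σ_m-definable injection of
`[0,y)` into `[0,x)`. -/
def GPHP (m : ℕ) : Prop := ∀ x : M, ∃ y : M, ¬ExSigmaInj M m y x

/-- WPHP(Σ_m): for `x > 0` there is no Σ_m-definable injection of `[0,2x)` into `[0,x)`. -/
def WPHP (m : ℕ) : Prop := ∀ x : M, 0 < x → ¬ExSigmaInj M m (x + x) x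

/-- `C` is a Σ_m-definable `k`-coloring of `[y]^e` (acting on codes of
`e`-element subsets of `[0,y)`, independently of the chosen code). -/
def IsColoring (m : ℕ) (e y k : M) (C : M → M → Prop) : Prop :=
  SigmaDef2 m M C ∧
    (∀ d D, CodesTupleIn d e y D → ∃ i, i < k ∧ C d i) ∧
    (∀ d d' D i i', CodesTupleIn d e y D → CodesTupleIn d' e y D → C d i → C d' i' → i = i')

/-- FRT^e_k(Σ_m): every Σ_m-definable `k`-coloring of some `[y]^e` has an
M-finite homogeneous set of cardinality `x`, for every `x`. -/
def FRT (m : ℕ) (e k : M) : Prop :=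
  ∀ x : M, ∃ y : M, ∀ C : M → M → Prop, IsColoring M m e y k C →
    ∃ (c : M) (H : Set M), CodesFinset c H x ∧ (∀ z ∈ H, z < y) ∧
      ∃ i, ∀ d D, CodesFinset d D e → D ⊆ H → C d i

/-- fairFRT^e_k(Σ_m): the homogeneous set is required to be given as the range of a
Σ_m-definable injection from `[0,x)` into `[0,y)`. -/
def FairFRT (m : ℕ) (e k : M) : Prop :=
  ∀ x : M, ∃ y : M, ∀ C : M → M → Prop, IsColoring M m e y k C →
    ∃ H : M → M → Prop, SigmaInjRel M m H x y ∧
      ∃ i, ∀ d D, CodesFinset d D e → (∀ z ∈ D, ∃ u, u < x ∧ H u z) → C d i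

/-- `C` is a Σ_m-definable `k`-coloring of `[0, y)`. -/
def IsColoring1 (m : ℕ) (y k : M) (C : M → M → Prop) : Prop :=
  SigmaDef2 m M C ∧
    (∀ z, z < y → ∃ i, i < k ∧ C z i) ∧
    (∀ z i i', z < y → C z i → C z i' → i = i')

/-- FRT¹_k(Σ_m): every Σ_m-definable `k`-coloring of some `[0,y)` has an M-finite
homogeneous set of cardinality `x`, for every `x`. -/
def FRT1 (m : ℕ) (k : M) : Prop :=
  ∀ x : M, ∃ y : M, ∀ C : M → M → Prop, IsColoring1 M m y k C →
    ∃ (c : M) (H : Set M), CodesFinset c H x ∧ (∀ z ∈ H, z < y) ∧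
      ∃ i, ∀ z ∈ H, C z i

/-- fairFRT¹_k(Σ_m). -/
def FairFRT1 (m : ℕ) (k : M) : Prop :=
  ∀ x : M, ∃ y : M, ∀ C : M → M → Prop, IsColoring1 M m y k C →
    ∃ H : M → M → Prop, SigmaInjRel M m H x y ∧
      ∃ i, ∀ u v, u < x → H u v → C v i

end Principles

section Approx

variable {M : Type} [lang.Structure M]

/-- `f` is (the graph of) a partial function. -/
def IsPartialFun (f : M → M → Prop) : Prop := ∀ x y y', f x y → f x y' → y = y'

/-- `s` codes an approximation to the partial function `f` of length `b`. -/
def IsApprox (f : M → M → Prop) (s b : M) : Prop :=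
  (∀ i, i < b → ∃ v, SeqAt s i v) ∧
    (∀ i u v x y, i + 1 < b → SeqAt s i u → SeqAt s (i + 1) v → x ≤ u → f x y → y ≤ v)

/-- `s` codes a `g`-stretched approximation to the partial function `f` of length `b`. -/
def IsStretchedApprox (f g : M → M → Prop) (s b : M) : Prop :=
  (∀ i, i < b → ∃ v, SeqAt s i v) ∧
    (∀ i u w v x y, i + 1 < b → SeqAt s i u → g u w → SeqAt s (i + 1) v →
      x ≤ w → f x y → y ≤ v)

/-- The eventual (limit) value of `fun s => h s ·` is `x`. -/
def EvLim (h : M → M → Prop) (x : M) : Prop := ∃ s : M, ∀ t, s < t → h t x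

end Approx

/-- PΣ_m: every partial Σ_m-definable function admits approximations of every length. -/
def PSig (m : ℕ) (M : Type) [lang.Structure M] : Prop :=
  ∀ f : M → M → Prop, SigmaDef2 m M f → IsPartialFun f → ∀ b : M, ∃ s, IsApprox f s b

section Extensions

variable (M N : Type) [lang.Structure M] [lang.Structure N]

/-- `g : M → N` is Σ_m-elementary: Σ_m formulas with parameters from `M` transfer. -/
def SigmaElem (m : ℕ) (g : M → N) : Prop :=
  ∀ (p : ℕ) (φ : lang.BoundedFormula (Fin p) 0), SigmaFm m 0 φ →
    ∀ v : Fin p → M, (φ.Realize v finZeroElim ↔ φ.Realize (g ∘ v) finZeroElim)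

/-- The extension `g : M → N` is cofinal. -/
def Cofinal (g : M → N) : Prop := ∀ z : N, ∃ x : M, z ≤ g x

/-- `[0,a]^M = [0,a]^N`: every element of `N` below `g a` comes from `M`. -/
def SameBelow (g : M → N) (a : M) : Prop := ∀ z : N, z ≤ g a → ∃ x : M, g x = z

end Extensions

section Ramsey

variable {M : Type} [lang.Structure M]

/-- `f` is an M-coded `k`-coloring of `[y]^e` (assigning colors to codes of
`e`-subsets of `[0,y)`, independently of the code). -/
def CodedColoring (f e y k : M) : Prop :=
  (∀ d D, CodesTupleIn d e y D → ∃ i, i < k ∧ SeqAt f d i) ∧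
    (∀ d d' D i i', CodesTupleIn d e y D → CodesTupleIn d' e y D →
      SeqAt f d i → SeqAt f d' i' → i = i')

/-- The coded coloring `f` of `[y]^e` has an M-coded homogeneous set of cardinality `x`. -/
def CodedHomog (f e y x : M) : Prop :=
  ∃ (c : M) (H : Set M), CodesFinset c H x ∧ (∀ z ∈ H, z < y) ∧
    ∃ i, ∀ d D, CodesFinset d D e → D ⊆ H → SeqAt f d i

/-- `y = r(x, e, k)`: `y` is the least size guaranteeing coded homogeneous sets of
cardinality `x` for all coded `k`-colorings of `e`-subsets. -/
def IsRamsey (x e k y : M) : Prop :=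
  (∀ f, CodedColoring f e y k → CodedHomog f e y x) ∧
    (∀ y', y' < y → ∃ f, CodedColoring f e y' k ∧ ¬CodedHomog f e y' x)

/-- `y = r^(b)(x, e, k)`: the `b`-th iterate of the Ramsey function inside `M`. -/
def IterRamsey (x e k b y : M) : Prop :=
  ∃ s : M, SeqAt s 0 x ∧ SeqAt s b y ∧ (∀ i, i ≤ b → ∃ u, SeqAt s i u) ∧
    (∀ i u v, i < b → SeqAt s i u → SeqAt s (i + 1) v → IsRamsey u e k v)

end Ramsey

end ArithFC

namespace ArithFC

/-!
An injection of `[0, y)` into `[0, k)` is a `k`-coloring without homogeneous pairs, so already the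
fair version of FRT¹ gives GPHP.

Conversely, write a `Σ_{n+1}` coloring as `C z i ↔ ∃ w, θ z i w` with `θ` in `Π_n`. If `Σ_{n+1}`
collection holds, the witnesses `w` for `z < y` have a common bound. If it fails, a counterexample
to collection is a function on some `[0, a)` with unbounded range, and every `z < y` has a witness
below one of its values. The sets of all `z` with color `i` and a witness below the `j`-th value
are coded, and there are `k * a` of them; if all had fewer than `x` elements, locating `z` by
`(i, j)` and its position in that set would inject `[0, y)` into `[0, k * a * x)`.

From two colors to GPHP, suppose that every `[0, K)` has a `Σ_{n+1}` injection into `[0, x)`, and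
apply it to a bound `K` on the codes of subsets of `[0, y)`. Each code `a` is processed at a step
determined by the least `w` witnessing its label below `x`, and at this step one still unused
element of the set coded by `a` receives color `0` and then another one color `1`. Distinct codes
have distinct labels, so at most `2 * x` elements are ever used up, and every set of cardinality
`2 * x + 1` receives both colors. By `Σ_n` induction the instances of the `Π_n` condition below
any bound are coded, so every initial segment of the process is recorded by a sequence, and being
selected at a given step is a `Σ_{n+1}` relation.
-/

/-! ### Arithmetic in models of PA⁻ -/

section Algebra

variable {M : Type} [lang.Structure M] [hM : Fact (PAm M)]

instance : CommSemiring M where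
  add_assoc := hM.out.add_assoc
  add_comm := hM.out.add_comm
  mul_assoc := hM.out.mul_assoc
  mul_comm := hM.out.mul_comm
  left_distrib := hM.out.ldistrib
  right_distrib x y z := by
    rw [hM.out.mul_comm, hM.out.ldistrib, hM.out.mul_comm z x, hM.out.mul_comm z y]
  add_zero := hM.out.add_zero
  zero_add x := by rw [hM.out.add_comm, hM.out.add_zero]
  mul_zero := hM.out.mul_zero
  zero_mul x := by rw [hM.out.mul_comm, hM.out.mul_zero]
  mul_one := hM.out.mul_one
  one_mul x := by rw [hM.out.mul_comm, hM.out.mul_one]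
  nsmul := nsmulRec
  npow := npowRec
  natCast := Nat.unaryCast

noncomputable instance : LinearOrder M where
  le_refl _ := Or.inr rfl
  le_trans x y z hxy hyz := by
    rcases hxy with hxy | rfl
    · rcases hyz with hyz | rfl
      · exact Or.inl (hM.out.lt_trans _ _ _ hxy hyz)
      · exact Or.inl hxy
    · exact hyz
  lt_iff_le_not_ge x y := by
    constructor
    · refine fun hxy => ⟨Or.inl hxy, ?_⟩
      rintro (hyx | rfl)
      · exact hM.out.lt_irrefl _ (hM.out.lt_trans _ _ _ hxy hyx)
      · exact hM.out.lt_irrefl _ hxy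
    · rintro ⟨hxy | rfl, hyx⟩
      · exact hxy
      · exact absurd (Or.inr rfl) hyx
  le_antisymm x y hxy hyx := by
    rcases hxy with hxy | rfl
    · rcases hyx with hyx | rfl
      · exact absurd (hM.out.lt_trans _ _ _ hxy hyx) (hM.out.lt_irrefl _)
      · rfl
    · rfl
  le_total x y := by
    rcases hM.out.lt_total x y with hxy | rfl | hyx
    · exact Or.inl (Or.inl hxy)
    · exact Or.inl (Or.inr rfl)
    · exact Or.inr (Or.inl hyx)
  toDecidableLE := Classical.decRel _

instance : IsStrictOrderedRing M where
  add_le_add_left a b hab c := by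
    rcases hab with hab | rfl
    · exact Or.inl (hM.out.add_lt_add _ _ _ hab)
    · exact Or.inr rfl
  le_of_add_le_add_left a b c habc := by
    by_contra hbc
    have hlt := hM.out.add_lt_add _ _ a (lt_of_not_ge hbc)
    rw [add_comm c a, add_comm b a] at hlt
    exact habc.not_gt hlt
  zero_le_one := Or.inl hM.out.zero_lt_one
  exists_pair_ne := ⟨0, 1, ne_of_lt hM.out.zero_lt_one⟩
  mul_lt_mul_of_pos_left a ha b c hbc := by
    simpa only [mul_comm] using hM.out.mul_lt_mul _ _ _ hbc ha
  mul_lt_mul_of_pos_right a ha b c hbc := hM.out.mul_lt_mul _ _ _ hbc ha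

instance : CanonicallyOrderedAdd M where
  exists_add_of_le {a b} hab := by
    rcases hab with hab | rfl
    · obtain ⟨z, hz⟩ := hM.out.sub_exists _ _ hab
      exact ⟨z, hz.symm⟩
    · exact ⟨0, (add_zero a).symm⟩
  le_add_self a b := le_add_of_nonneg_left (hM.out.zero_le b)
  le_self_add a b := le_add_of_nonneg_right (hM.out.zero_le b)

instance : SuccAddOrder M where
  succ x := x + 1
  le_succ x := le_self_add
  max_of_succ_le hx := absurd (lt_add_one _) hx.not_gt
  succ_le_of_lt {x y} hxy := by
    obtain ⟨d, rfl⟩ := exists_add_of_le hxy.le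
    have hd : 0 < d := pos_of_lt_add_right hxy
    gcongr
    exact hM.out.discrete d hd
  succ_eq_add_one _ := rfl

theorem lt_iff_exists_add_add_one {x y : M} : x < y ↔ ∃ d, y = x + d + 1 := by
  rw [← Order.add_one_le_iff, le_iff_exists_add]
  simp only [add_right_comm]

theorem eq_zero_or_exists_add_one (x : M) : x = 0 ∨ ∃ d, x = d + 1 := by
  refine (eq_zero_or_pos x).imp_right fun hx => ?_
  simpa only [zero_add] using lt_iff_exists_add_add_one.1 hx

theorem mul_add_inj_of_lt {q q' b r r' : M} (hr : r < b) (hr' : r' < b)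
    (h : q * b + r = q' * b + r') : q = q' ∧ r = r' := by
  have not_lt_quotient : ∀ {q q' r r' : M}, r < b → q * b + r = q' * b + r' → ¬ q < q' := by
    intro q q' r r' hr h hlt
    obtain ⟨d, rfl⟩ := lt_iff_exists_add_add_one.1 hlt
    refine h.not_lt ?_
    calc q * b + r < q * b + b := by gcongr
      _ ≤ q * b + b + (d * b + r') := le_self_add
      _ = (q + d + 1) * b + r' := by ring
  obtain rfl : q = q' :=
    le_antisymm (not_lt.1 (not_lt_quotient hr' h.symm)) (not_lt.1 (not_lt_quotient hr h))
  exact ⟨rfl, add_left_cancel h⟩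

theorem mul_add_lt_mul {a b q r : M} (hq : q < a) (hr : r < b) : q * b + r < a * b :=
  calc q * b + r < q * b + b := by gcongr
    _ = (q + 1) * b := by ring
    _ ≤ a * b := by gcongr; exact Order.add_one_le_of_lt hq

end Algebra

/-! ### The arithmetic hierarchy, semantically -/

section Hierarchy

variable {M : Type} [lang.Structure M]

/-- The functions of a tuple of arguments that are given by a term with parameters. -/
inductive IsTermFun {k : ℕ} : ((Fin k → M) → M) → Prop
  | var (i : Fin k) : IsTermFun fun v => v i
  | const (a : M) : IsTermFun fun _ => a
  | add {f g : (Fin k → M) → M} : IsTermFun f → IsTermFun g → IsTermFun fun v => f v + g v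
  | mul {f g : (Fin k → M) → M} : IsTermFun f → IsTermFun g → IsTermFun fun v => f v * g v

/-- The relations given by a `Δ₀` formula with parameters, generated directly as relations. The
variable bound by `ball` is the last coordinate of the longer tuple. -/
inductive IsDelta0Rel : ∀ {k : ℕ}, ((Fin k → M) → Prop) → Prop
  | falsum {k : ℕ} : IsDelta0Rel fun _ : Fin k → M => False
  | eq {k : ℕ} {f g : (Fin k → M) → M} :
      IsTermFun f → IsTermFun g → IsDelta0Rel fun v => f v = g v
  | lt {k : ℕ} {f g : (Fin k → M) → M} :
      IsTermFun f → IsTermFun g → IsDelta0Rel fun v => f v < g v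
  | imp {k : ℕ} {R S : (Fin k → M) → Prop} :
      IsDelta0Rel R → IsDelta0Rel S → IsDelta0Rel fun v => R v → S v
  | ball {k : ℕ} {f : (Fin k → M) → M} {R : (Fin k → M) → M → Prop} : IsTermFun f →
      IsDelta0Rel (fun w : Fin (k + 1) → M => R (fun i => w i.castSucc) (w (Fin.last k))) →
      IsDelta0Rel fun v => ∀ x, x < f v → R v x

/-- The relations given by a `Σ_m` formula with parameters, generated directly as relations. -/
inductive IsSigmaRel : ℕ → ∀ {k : ℕ}, ((Fin k → M) → Prop) → Prop
  | ofDelta0 (m : ℕ) {k : ℕ} {R : (Fin k → M) → Prop} : IsDelta0Rel R → IsSigmaRel m R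
  | ofNot (m : ℕ) {k : ℕ} {R : (Fin k → M) → Prop} :
      IsSigmaRel m (fun v => ¬R v) → IsSigmaRel (m + 1) R
  | ex (m : ℕ) {k : ℕ} {R : (Fin k → M) → M → Prop} :
      IsSigmaRel (m + 1)
        (fun w : Fin (k + 1) → M => R (fun i => w i.castSucc) (w (Fin.last k))) →
      IsSigmaRel (m + 1) fun v => ∃ x, R v x

/-- The relations given by a `Π_m` formula with parameters, as complements of `Σ_m` relations. -/
def IsPiRel (m : ℕ) {k : ℕ} (R : (Fin k → M) → Prop) : Prop := IsSigmaRel m fun v => ¬R v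

namespace IsTermFun

variable {k l : ℕ}

theorem comp {f : (Fin k → M) → M} (hf : IsTermFun f) {g : Fin k → (Fin l → M) → M}
    (hg : ∀ i, IsTermFun (g i)) : IsTermFun fun v => f fun i => g i v := by
  induction hf with
  | var i => exact hg i
  | const a => exact const a
  | add _ _ hf hg => exact add hf hg
  | mul _ _ hf hg => exact mul hf hg

theorem comp_castSucc {f : (Fin k → M) → M} (hf : IsTermFun f) :
    IsTermFun fun w : Fin (k + 1) → M => f fun i => w i.castSucc :=
  hf.comp fun i => var i.castSucc

theorem snoc {g : Fin k → (Fin l → M) → M} (hg : ∀ i, IsTermFun (g i)) {f : (Fin l → M) → M}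
    (hf : IsTermFun f) (i : Fin (k + 1)) :
    IsTermFun fun v => (Fin.snoc (fun i => g i v) (f v) : Fin (k + 1) → M) i := by
  refine Fin.lastCases ?_ (fun i => ?_) i
  · simpa only [Fin.snoc_last] using hf
  · simpa only [Fin.snoc_castSucc] using hg i

end IsTermFun

namespace IsDelta0Rel

variable {k l : ℕ} {R S : (Fin k → M) → Prop}

theorem of_iff (hR : IsDelta0Rel R) (h : ∀ v, S v ↔ R v) : IsDelta0Rel S :=
  (funext fun v => propext (h v) : S = R) ▸ hR

theorem comp (hR : IsDelta0Rel R) {g : Fin k → (Fin l → M) → M} (hg : ∀ i, IsTermFun (g i)) :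
    IsDelta0Rel fun v => R fun i => g i v := by
  induction hR generalizing l with
  | falsum => exact falsum
  | eq hf hf' => exact eq (hf.comp hg) (hf'.comp hg)
  | lt hf hf' => exact lt (hf.comp hg) (hf'.comp hg)
  | imp _ _ hR hS => exact imp (hR hg) (hS hg)
  | @ball k f R hf _ ih =>
    refine ball (R := fun v x => R (fun i => g i v) x) (hf.comp hg) ?_
    refine (ih (IsTermFun.snoc (fun i => (hg i).comp_castSucc) (.var (Fin.last l)))).of_iff
      fun w => ?_
    simp only [Fin.snoc_castSucc, Fin.snoc_last]

theorem not (hR : IsDelta0Rel R) : IsDelta0Rel fun v => ¬R v := imp hR falsum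

theorem and (hR : IsDelta0Rel R) (hS : IsDelta0Rel S) : IsDelta0Rel fun v => R v ∧ S v :=
  (hR.imp hS.not).not.of_iff fun v => by tauto

theorem or (hR : IsDelta0Rel R) (hS : IsDelta0Rel S) : IsDelta0Rel fun v => R v ∨ S v :=
  (hR.not.imp hS).of_iff fun v => by tauto

theorem bex {f : (Fin k → M) → M} {R : (Fin k → M) → M → Prop} (hf : IsTermFun f)
    (hR : IsDelta0Rel fun w : Fin (k + 1) → M => R (fun i => w i.castSucc) (w (Fin.last k))) :
    IsDelta0Rel fun v => ∃ x, x < f v ∧ R v x :=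
  (ball (R := fun v x => ¬R v x) hf hR.not).not.of_iff fun v => by push Not; rfl

end IsDelta0Rel

namespace IsSigmaRel

variable {k l m : ℕ} {R S : (Fin k → M) → Prop}

theorem of_iff (hR : IsSigmaRel m R) (h : ∀ v, S v ↔ R v) : IsSigmaRel m S :=
  (funext fun v => propext (h v) : S = R) ▸ hR

theorem isDelta0Rel (hR : IsSigmaRel 0 R) : IsDelta0Rel R := by
  cases hR with
  | ofDelta0 _ hR => exact hR

theorem ofPi (hR : IsPiRel m R) : IsSigmaRel (m + 1) R := ofNot m hR

theorem not (hR : IsSigmaRel m R) : IsPiRel m fun v => ¬R v := hR.of_iff fun _ => not_not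

theorem succ_mono (hR : IsSigmaRel m R) : IsSigmaRel (m + 1) R := by
  induction hR with
  | ofDelta0 m hR => exact ofDelta0 _ hR
  | ofNot m _ ih => exact ofNot _ ih
  | ex m _ ih => exact ex _ ih

theorem mono {m' : ℕ} (hR : IsSigmaRel m R) (h : m ≤ m') : IsSigmaRel m' R := by
  induction h with
  | refl => exact hR
  | step _ ih => exact ih.succ_mono

theorem succ_induction {motive : ∀ (k : ℕ) (R : (Fin k → M) → Prop), IsSigmaRel (m + 1) R → Prop}
    (ofPi : ∀ {k} {R : (Fin k → M) → Prop} (hR : IsPiRel m R), motive k R (ofPi hR))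
    (ex : ∀ {k} {R : (Fin k → M) → M → Prop}
      (hR : IsSigmaRel (m + 1)
        fun w : Fin (k + 1) → M => R (fun i => w i.castSucc) (w (Fin.last k))),
      motive (k + 1) _ hR → motive k _ (ex m hR))
    (hR : IsSigmaRel (m + 1) R) : motive k R hR := by
  suffices ∀ {m'} {k} {R : (Fin k → M) → Prop} (hR : IsSigmaRel m' R) (hm : m' = m + 1),
      motive k R (hm ▸ hR) from this hR rfl
  intro m' k R hR hm
  induction hR with
  | ofDelta0 _ hR => exact ofPi (.ofDelta0 _ hR.not)
  | ofNot _ hR => cases hm; exact ofPi hR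
  | ex _ hR ih => cases hm; exact ex hR (ih rfl)

theorem comp (hR : IsSigmaRel m R) {g : Fin k → (Fin l → M) → M} (hg : ∀ i, IsTermFun (g i)) :
    IsSigmaRel m fun v => R fun i => g i v := by
  induction hR generalizing l with
  | ofDelta0 m hR => exact ofDelta0 m (hR.comp hg)
  | ofNot m _ ih => exact ofNot m (ih hg)
  | @ex m k R _ ih =>
    refine ex m (R := fun v x => R (fun i => g i v) x) ?_
    refine (ih (IsTermFun.snoc (fun i => (hg i).comp_castSucc) (.var (Fin.last l)))).of_iff
      fun w => ?_
    simp only [Fin.snoc_castSucc, Fin.snoc_last]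

theorem comp_castSucc (hR : IsSigmaRel m R) :
    IsSigmaRel m fun w : Fin (k + 1) → M => R fun i => w i.castSucc :=
  hR.comp fun i => .var i.castSucc

/-- Prenexing, for a binary connective `op` through which existential quantifiers move out. -/
theorem op_of_exists_comm {op : Prop → Prop → Prop}
    (exists_left : ∀ (P : M → Prop) (q : Prop), op (∃ x, P x) q ↔ ∃ x, op (P x) q)
    (exists_right : ∀ (p : Prop) (Q : M → Prop), op p (∃ x, Q x) ↔ ∃ x, op p (Q x))
    (hop : ∀ {k} {R S : (Fin k → M) → Prop}, IsPiRel m R → IsPiRel m S →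
      IsPiRel m fun v => op (R v) (S v))
    (hR : IsSigmaRel (m + 1) R) (hS : IsSigmaRel (m + 1) S) :
    IsSigmaRel (m + 1) fun v => op (R v) (S v) := by
  induction hR using succ_induction with
  | ofPi hR =>
    induction hS using succ_induction with
    | ofPi hS => exact ofPi (hop hR hS)
    | ex _ ih => exact (ex m (ih hR.comp_castSucc)).of_iff fun _ => exists_right _ _
  | ex _ ih => exact (ex m (ih hS.comp_castSucc)).of_iff fun _ => exists_left _ _

theorem and_or (hR : IsSigmaRel m R) (hS : IsSigmaRel m S) :
    IsSigmaRel m (fun v => R v ∧ S v) ∧ IsSigmaRel m fun v => R v ∨ S v := by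
  induction m generalizing k with
  | zero =>
    exact ⟨ofDelta0 0 (hR.isDelta0Rel.and hS.isDelta0Rel),
      ofDelta0 0 (hR.isDelta0Rel.or hS.isDelta0Rel)⟩
  | succ m ih =>
    have : Nonempty M := ⟨0⟩
    exact ⟨op_of_exists_comm (fun _ _ => exists_and_right.symm) (fun _ _ => exists_and_left.symm)
        (fun hR hS => (ih hR hS).2.of_iff fun _ => not_and_or) hR hS,
      op_of_exists_comm (fun _ _ => by rw [exists_or, exists_const])
        (fun _ _ => by rw [exists_or, exists_const])
        (fun hR hS => (ih hR hS).1.of_iff fun _ => not_or) hR hS⟩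

theorem and (hR : IsSigmaRel m R) (hS : IsSigmaRel m S) : IsSigmaRel m fun v => R v ∧ S v :=
  (and_or hR hS).1

theorem or (hR : IsSigmaRel m R) (hS : IsSigmaRel m S) : IsSigmaRel m fun v => R v ∨ S v :=
  (and_or hR hS).2

theorem imp (hR : IsPiRel m R) (hS : IsSigmaRel m S) : IsSigmaRel m fun v => R v → S v :=
  (or hR hS).of_iff fun _ => imp_iff_not_or

theorem bex {f : (Fin k → M) → M} {R : (Fin k → M) → M → Prop} (hf : IsTermFun f)
    (hR : IsSigmaRel m fun w : Fin (k + 1) → M => R (fun i => w i.castSucc) (w (Fin.last k))) :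
    IsSigmaRel m fun v => ∃ x, x < f v ∧ R v x := by
  cases m with
  | zero => exact ofDelta0 0 (.bex hf hR.isDelta0Rel)
  | succ m =>
    exact ex m (R := fun v x => x < f v ∧ R v x)
      (and (ofDelta0 _ (.lt (.var _) hf.comp_castSucc)) hR)

end IsSigmaRel

namespace IsPiRel

variable {k l m : ℕ} {R S : (Fin k → M) → Prop}

theorem of_iff (hR : IsPiRel m R) (h : ∀ v, S v ↔ R v) : IsPiRel m S :=
  IsSigmaRel.of_iff hR fun v => not_congr (h v)

theorem ofDelta0 (m : ℕ) (hR : IsDelta0Rel R) : IsPiRel m R :=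
  IsSigmaRel.ofDelta0 m hR.not

theorem comp (hR : IsPiRel m R) {g : Fin k → (Fin l → M) → M} (hg : ∀ i, IsTermFun (g i)) :
    IsPiRel m fun v => R fun i => g i v :=
  IsSigmaRel.comp hR hg

theorem comp_snoc {Q : (Fin k → M) → M → Prop}
    (hQ : IsPiRel m fun w : Fin (k + 1) → M => Q (fun i => w i.castSucc) (w (Fin.last k)))
    {g : Fin k → (Fin l → M) → M} (hg : ∀ i, IsTermFun (g i)) {f : (Fin l → M) → M}
    (hf : IsTermFun f) : IsPiRel m fun v => Q (fun i => g i v) (f v) :=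
  (hQ.comp (IsTermFun.snoc hg hf)).of_iff fun v => by
    simp only [Fin.snoc_castSucc, Fin.snoc_last]

theorem not (hR : IsPiRel m R) : IsSigmaRel m fun v => ¬R v := hR

theorem and (hR : IsPiRel m R) (hS : IsPiRel m S) : IsPiRel m fun v => R v ∧ S v :=
  (IsSigmaRel.or hR hS).of_iff fun _ => not_and_or

theorem imp (hR : IsSigmaRel m R) (hS : IsPiRel m S) : IsPiRel m fun v => R v → S v :=
  (IsSigmaRel.and hR hS).of_iff fun _ => Classical.not_imp

theorem all {R : (Fin k → M) → M → Prop}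
    (hR : IsPiRel (m + 1)
      fun w : Fin (k + 1) → M => R (fun i => w i.castSucc) (w (Fin.last k))) :
    IsPiRel (m + 1) fun v => ∀ x, R v x :=
  (IsSigmaRel.ex m (R := fun v x => ¬R v x) hR).of_iff fun _ => not_forall

theorem ball {f : (Fin k → M) → M} {R : (Fin k → M) → M → Prop} (hf : IsTermFun f)
    (hR : IsPiRel m fun w : Fin (k + 1) → M => R (fun i => w i.castSucc) (w (Fin.last k))) :
    IsPiRel m fun v => ∀ x, x < f v → R v x :=
  (IsSigmaRel.bex (R := fun v x => ¬R v x) hf hR).of_iff fun v => by push Not; rfl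

end IsPiRel

end Hierarchy

/-! ### Comparison with definability by formulas -/

theorem vec_two_eta {X : Type} (x : Fin 2 → X) : ![x 0, x 1] = x :=
  FinVec.etaExpand_eq x

section Definability

variable {M : Type} [lang.Structure M] {k m n : ℕ} {α : Type}

theorem realize_liftAt_snoc (t : lang.Term (α ⊕ Fin n)) (e : α → M) (b : Fin n → M) (x : M) :
    (t.liftAt 1 n).realize (Sum.elim e (Fin.snoc b x : Fin (n + 1) → M)) =
      t.realize (Sum.elim e b) := by
  rw [Term.realize_liftAt]
  congr 1
  funext a
  rcases a with a | i
  · rfl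
  · have hi : (if (i : ℕ) < n then Fin.castAdd 1 i else i.addNat 1) = i.castSucc := if_pos i.2
    simp only [Function.comp, Sum.map_inr, Sum.elim_inr, hi, Fin.snoc_castSucc]

theorem realize_ltFm (t u : lang.Term (α ⊕ Fin n)) (e : α → M) (b : Fin n → M) :
    (ltFm t u).Realize e b ↔ t.realize (Sum.elim e b) < u.realize (Sum.elim e b) :=
  BoundedFormula.realize_rel₂

theorem realize_bdAll (t : lang.Term (α ⊕ Fin n)) (φ : lang.BoundedFormula α (n + 1))
    (e : α → M) (b : Fin n → M) :
    (BoundedFormula.all ((ltFm (Term.var (Sum.inr (Fin.last n))) (t.liftAt 1 n)).imp φ)).Realize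
      e b ↔ ∀ x, x < t.realize (Sum.elim e b) → φ.Realize e (Fin.snoc b x) := by
  simp only [BoundedFormula.realize_all, BoundedFormula.realize_imp, realize_ltFm,
    realize_liftAt_snoc, Term.realize_var, Sum.elim_inr, Fin.snoc_last]

theorem realize_apply₂_add {β : Type} (t u : lang.Term β) (v : β → M) :
    (Functions.apply₂ (L := lang) Func.add t u).realize v = t.realize v + u.realize v :=
  Term.realize_functions_apply₂

theorem realize_apply₂_mul {β : Type} (t u : lang.Term β) (v : β → M) :
    (Functions.apply₂ (L := lang) Func.mul t u).realize v = t.realize v * u.realize v :=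
  Term.realize_functions_apply₂

theorem isTermFun_realize {β : Type} (t : lang.Term β) {e : β → (Fin k → M) → M}
    (he : ∀ a, IsTermFun (e a)) : IsTermFun fun v => t.realize fun a => e a v := by
  induction t with
  | var a => exact he a
  | func F ts ih =>
    simp only [Term.realize_func]
    cases F with
    | zero =>
      simp only [Subsingleton.elim _ (![] : Fin 0 → M)]
      exact .const 0
    | one =>
      simp only [Subsingleton.elim _ (![] : Fin 0 → M)]
      exact .const 1
    | add =>
      simp only [← vec_two_eta fun i => Term.realize _ (ts i)]
      exact (ih 0).add (ih 1)
    | mul =>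
      simp only [← vec_two_eta fun i => Term.realize _ (ts i)]
      exact (ih 0).mul (ih 1)

section FormulaToRel

variable {e : α → (Fin k → M) → M} {b : Fin n → (Fin k → M) → M}

theorem isTermFun_realize_sumElim (t : lang.Term (α ⊕ Fin n)) (he : ∀ a, IsTermFun (e a))
    (hb : ∀ i, IsTermFun (b i)) :
    IsTermFun fun v => t.realize (Sum.elim (fun a => e a v) fun i => b i v) := by
  convert isTermFun_realize t (e := Sum.elim e b) (Sum.forall.2 ⟨he, hb⟩) with v a
  cases a <;> rfl

theorem IsDelta0.isDelta0Rel {φ : lang.BoundedFormula α n} (hφ : IsDelta0 n φ)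
    (he : ∀ a, IsTermFun (e a)) (hb : ∀ i, IsTermFun (b i)) :
    IsDelta0Rel fun v => φ.Realize (fun a => e a v) fun i => b i v := by
  induction hφ generalizing k with
  | falsum n => exact .falsum
  | equal n t u =>
    exact .eq (isTermFun_realize_sumElim t he hb) (isTermFun_realize_sumElim u he hb)
  | rel n l R ts =>
    cases R
    exact (IsDelta0Rel.lt (isTermFun_realize_sumElim (ts 0) he hb)
      (isTermFun_realize_sumElim (ts 1) he hb)).of_iff fun v =>
        iff_of_eq (congrArg _ (vec_two_eta _).symm)
  | imp n _ _ ih₁ ih₂ => exact (ih₁ he hb).imp (ih₂ he hb)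
  | bdAll n t _ ih =>
    simp only [realize_bdAll]
    exact .ball (isTermFun_realize_sumElim t he hb)
      (ih (fun a => (he a).comp_castSucc) (.snoc (fun i => (hb i).comp_castSucc) (.var _)))

mutual

theorem SigmaFm.isSigmaRel {k m n : ℕ} {φ : lang.BoundedFormula α n} : SigmaFm m n φ →
    ∀ {e : α → (Fin k → M) → M} {b : Fin n → (Fin k → M) → M}, (∀ a, IsTermFun (e a)) →
      (∀ i, IsTermFun (b i)) → IsSigmaRel m fun v => φ.Realize (fun a => e a v) fun i => b i v
  | .delta0 _ _ hφ => fun he hb => .ofDelta0 _ (hφ.isDelta0Rel he hb)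
  | .ofPi _ _ hφ => fun he hb => .ofPi (hφ.isPiRel he hb)
  | .ex _ _ hφ => fun he hb => by
    simp only [BoundedFormula.realize_ex]
    exact .ex _ (hφ.isSigmaRel (fun a => (he a).comp_castSucc)
      (.snoc (fun i => (hb i).comp_castSucc) (.var _)))

theorem PiFm.isPiRel {k m n : ℕ} {φ : lang.BoundedFormula α n} : PiFm m n φ →
    ∀ {e : α → (Fin k → M) → M} {b : Fin n → (Fin k → M) → M}, (∀ a, IsTermFun (e a)) →
      (∀ i, IsTermFun (b i)) → IsPiRel m fun v => φ.Realize (fun a => e a v) fun i => b i v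
  | .delta0 _ _ hφ => fun he hb => .ofDelta0 _ (hφ.isDelta0Rel he hb)
  | .ofSigma _ _ hφ => fun he hb => .ofPi ((hφ.isSigmaRel he hb).not)
  | .all _ _ hφ => fun he hb => by
    simp only [BoundedFormula.realize_all]
    exact .all (hφ.isPiRel (fun a => (he a).comp_castSucc)
      (.snoc (fun i => (hb i).comp_castSucc) (.var _)))

end

end FormulaToRel

/-- `R` is defined by formulas in the class `C`, in any context: `τ` are terms for the arguments of
`R` and `c` assigns terms to the finitely many parameters in `s`. -/
def IsRealizedBy (C : ∀ {α : Type} (n : ℕ), lang.BoundedFormula α n → Prop)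
    (R : (Fin k → M) → Prop) : Prop :=
  ∃ s : Finset M, ∀ {α : Type} {n : ℕ} (τ : Fin k → lang.Term (α ⊕ Fin n))
    (c : M → lang.Term (α ⊕ Fin n)), ∃ φ, C n φ ∧ ∀ (e : α → M) (b : Fin n → M),
      (∀ a ∈ s, (c a).realize (Sum.elim e b) = a) →
      (φ.Realize e b ↔ R fun i => (τ i).realize (Sum.elim e b))

section RelToFormula

variable {C : ∀ {α : Type} (n : ℕ), lang.BoundedFormula α n → Prop} {R : (Fin k → M) → Prop}

theorem IsRealizedBy.mono {C' : ∀ {α : Type} (n : ℕ), lang.BoundedFormula α n → Prop}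
    (h : ∀ {α : Type} {n : ℕ} {φ : lang.BoundedFormula α n}, C n φ → C' n φ)
    (hR : IsRealizedBy C R) : IsRealizedBy C' R := by
  obtain ⟨s, hs⟩ := hR
  refine ⟨s, fun τ c => ?_⟩
  obtain ⟨φ, hφ, hφR⟩ := hs τ c
  exact ⟨φ, h hφ, hφR⟩

theorem IsRealizedBy.of_iff {S : (Fin k → M) → Prop} (hR : IsRealizedBy C R)
    (h : ∀ v, S v ↔ R v) : IsRealizedBy C S :=
  (funext fun v => propext (h v) : S = R) ▸ hR

theorem IsRealizedBy.under_binder {R : (Fin k → M) → M → Prop}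
    (hR : IsRealizedBy C fun w : Fin (k + 1) → M => R (fun i => w i.castSucc) (w (Fin.last k))) :
    ∃ s : Finset M, ∀ {α : Type} {n : ℕ} (τ : Fin k → lang.Term (α ⊕ Fin n))
      (c : M → lang.Term (α ⊕ Fin n)), ∃ φ, C (n + 1) φ ∧ ∀ (e : α → M) (b : Fin n → M),
        (∀ a ∈ s, (c a).realize (Sum.elim e b) = a) → ∀ x,
        (φ.Realize e (Fin.snoc b x) ↔ R (fun i => (τ i).realize (Sum.elim e b)) x) := by
  obtain ⟨s, hs⟩ := hR
  refine ⟨s, fun {α n} τ c => ?_⟩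
  obtain ⟨φ, hφ, hφR⟩ := hs (Fin.snoc (fun i => (τ i).liftAt 1 n) (.var (.inr (Fin.last n))))
    fun a => (c a).liftAt 1 n
  refine ⟨φ, hφ, fun e b hc x => ?_⟩
  rw [hφR e _ fun a ha => (realize_liftAt_snoc _ _ _ _).trans (hc a ha)]
  simp only [Fin.snoc_castSucc, Fin.snoc_last, realize_liftAt_snoc, Term.realize_var, Sum.elim_inr]

theorem IsTermFun.exists_realize_eq {f : (Fin k → M) → M} (hf : IsTermFun f) :
    ∃ s : Finset M, ∀ {α : Type} {n : ℕ} (τ : Fin k → lang.Term (α ⊕ Fin n))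
      (c : M → lang.Term (α ⊕ Fin n)), ∃ t : lang.Term (α ⊕ Fin n), ∀ (e : α → M) (b : Fin n → M),
        (∀ a ∈ s, (c a).realize (Sum.elim e b) = a) →
        t.realize (Sum.elim e b) = f fun i => (τ i).realize (Sum.elim e b) := by
  classical
  induction hf with
  | var i => exact ⟨∅, fun τ _ => ⟨τ i, fun _ _ _ => rfl⟩⟩
  | const a => exact ⟨{a}, fun _ c => ⟨c a, fun e b hc => hc a (Finset.mem_singleton_self a)⟩⟩
  | add _ _ ihf ihg =>
    obtain ⟨s, hs⟩ := ihf
    obtain ⟨s', hs'⟩ := ihg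
    refine ⟨s ∪ s', fun τ c => ?_⟩
    obtain ⟨t, ht⟩ := hs τ c
    obtain ⟨u, hu⟩ := hs' τ c
    refine ⟨Functions.apply₂ (L := lang) Func.add t u, fun e b hc => ?_⟩
    rw [Finset.forall_mem_union] at hc
    rw [realize_apply₂_add, ht e b hc.1, hu e b hc.2]
  | mul _ _ ihf ihg =>
    obtain ⟨s, hs⟩ := ihf
    obtain ⟨s', hs'⟩ := ihg
    refine ⟨s ∪ s', fun τ c => ?_⟩
    obtain ⟨t, ht⟩ := hs τ c
    obtain ⟨u, hu⟩ := hs' τ c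
    refine ⟨Functions.apply₂ (L := lang) Func.mul t u, fun e b hc => ?_⟩
    rw [Finset.forall_mem_union] at hc
    rw [realize_apply₂_mul, ht e b hc.1, hu e b hc.2]

theorem IsTermFun.exists_realize_eq_and_eq {f g : (Fin k → M) → M} (hf : IsTermFun f)
    (hg : IsTermFun g) :
    ∃ s : Finset M, ∀ {α : Type} {n : ℕ} (τ : Fin k → lang.Term (α ⊕ Fin n))
      (c : M → lang.Term (α ⊕ Fin n)), ∃ t u : lang.Term (α ⊕ Fin n),
        ∀ (e : α → M) (b : Fin n → M), (∀ a ∈ s, (c a).realize (Sum.elim e b) = a) →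
          t.realize (Sum.elim e b) = f (fun i => (τ i).realize (Sum.elim e b)) ∧
            u.realize (Sum.elim e b) = g fun i => (τ i).realize (Sum.elim e b) := by
  classical
  obtain ⟨s, hs⟩ := hf.exists_realize_eq
  obtain ⟨s', hs'⟩ := hg.exists_realize_eq
  refine ⟨s ∪ s', fun τ c => ?_⟩
  obtain ⟨t, ht⟩ := hs τ c
  obtain ⟨u, hu⟩ := hs' τ c
  refine ⟨t, u, fun e b hc => ?_⟩
  rw [Finset.forall_mem_union] at hc
  exact ⟨ht e b hc.1, hu e b hc.2⟩

theorem IsDelta0Rel.isRealizedBy (hR : IsDelta0Rel R) : IsRealizedBy IsDelta0 R := by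
  classical
  induction hR with
  | falsum => exact ⟨∅, fun _ _ => ⟨_, .falsum _, fun _ _ _ => Iff.rfl⟩⟩
  | eq hf hg =>
    obtain ⟨s, hs⟩ := hf.exists_realize_eq_and_eq hg
    refine ⟨s, fun τ c => ?_⟩
    obtain ⟨t, u, htu⟩ := hs τ c
    refine ⟨_, .equal _ t u, fun e b hc => ?_⟩
    beta_reduce
    rw [← (htu e b hc).1, ← (htu e b hc).2]
    rfl
  | lt hf hg =>
    obtain ⟨s, hs⟩ := hf.exists_realize_eq_and_eq hg
    refine ⟨s, fun τ c => ?_⟩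
    obtain ⟨t, u, htu⟩ := hs τ c
    refine ⟨ltFm t u, .rel _ _ _ _, fun e b hc => ?_⟩
    rw [realize_ltFm, (htu e b hc).1, (htu e b hc).2]
  | imp _ _ ihR ihS =>
    obtain ⟨s, hs⟩ := ihR
    obtain ⟨s', hs'⟩ := ihS
    refine ⟨s ∪ s', fun τ c => ?_⟩
    obtain ⟨φ, hφ, hφR⟩ := hs τ c
    obtain ⟨ψ, hψ, hψS⟩ := hs' τ c
    refine ⟨_, hφ.imp _ hψ, fun e b hc => ?_⟩
    rw [Finset.forall_mem_union] at hc
    rw [BoundedFormula.realize_imp, hφR e b hc.1, hψS e b hc.2]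
  | ball hf _ ihR =>
    obtain ⟨s, hs⟩ := hf.exists_realize_eq
    obtain ⟨s', hs'⟩ := ihR.under_binder
    refine ⟨s ∪ s', fun τ c => ?_⟩
    obtain ⟨t, ht⟩ := hs τ c
    obtain ⟨φ, hφ, hφR⟩ := hs' τ c
    refine ⟨_, hφ.bdAll _ t, fun e b hc => ?_⟩
    rw [Finset.forall_mem_union] at hc
    simp only [realize_bdAll, ht e b hc.1, hφR e b hc.2]

theorem IsSigmaRel.isRealizedBy_and_not (hR : IsSigmaRel m R) :
    IsRealizedBy (SigmaFm m) R ∧ IsRealizedBy (PiFm m) fun v => ¬R v := by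
  induction hR with
  | ofDelta0 m hR =>
    exact ⟨hR.isRealizedBy.mono (.delta0 _ _), hR.not.isRealizedBy.mono (.delta0 _ _)⟩
  | ofNot m _ ih =>
    exact ⟨(ih.2.of_iff fun _ => not_not.symm).mono (.ofPi _ _), ih.1.mono (.ofSigma _ _)⟩
  | ex m _ ih =>
    obtain ⟨s, hs⟩ := ih.1.under_binder
    obtain ⟨s', hs'⟩ := ih.2.under_binder (R := fun v x => ¬_)
    refine ⟨⟨s, fun τ c => ?_⟩, ⟨s', fun τ c => ?_⟩⟩
    · obtain ⟨φ, hφ, hφR⟩ := hs τ c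
      exact ⟨_, hφ.ex, fun e b hc => by simp only [BoundedFormula.realize_ex, hφR e b hc]⟩
    · obtain ⟨φ, hφ, hφR⟩ := hs' τ c
      exact ⟨_, hφ.all, fun e b hc => by
        simp only [BoundedFormula.realize_all, hφR e b hc, not_exists]⟩

theorem IsSigmaDef.isSigmaRel (hR : IsSigmaDef m M R) : IsSigmaRel m R := by
  obtain ⟨p, φ, w, hφ, hφR⟩ := hR
  have he : ∀ a, IsTermFun fun v : Fin k → M => (Sum.elim v w : Fin k ⊕ Fin p → M) a :=
    Sum.forall.2 ⟨.var, fun j => .const (w j)⟩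
  refine (hφ.isSigmaRel he (b := fun i => i.elim0) fun i => i.elim0).of_iff fun v => ?_
  rw [hφR]
  exact iff_of_eq (congrArg _ (Subsingleton.elim _ _))

theorem IsSigmaRel.isSigmaDef (hR : IsSigmaRel m R) : IsSigmaDef m M R := by
  obtain ⟨s, hs⟩ := hR.isRealizedBy_and_not.1
  have parameter_term (a : M) : ∃ t : lang.Term ((Fin k ⊕ Fin s.card) ⊕ Fin 0), a ∈ s →
      ∀ (v : Fin k → M) b, t.realize (Sum.elim (Sum.elim v fun j => s.equivFin.symm j) b) = a := by
    by_cases ha : a ∈ s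
    · refine ⟨.var (.inl (.inr (s.equivFin ⟨a, ha⟩))), fun _ v b => ?_⟩
      simp only [Term.realize_var, Sum.elim_inl, Sum.elim_inr, Equiv.symm_apply_apply]
    · exact ⟨.func (L := lang) Func.zero ![], fun h => absurd h ha⟩
  choose c hc using parameter_term
  obtain ⟨φ, hφ, hφR⟩ := hs (fun i => .var (.inl (.inl i))) c
  exact ⟨s.card, φ, fun j => s.equivFin.symm j, hφ, fun v =>
    (hφR _ _ fun a ha => hc a ha v _).symm⟩

end RelToFormula

end Definability

attribute [local irreducible] IsPiRel

/-! ### Induction and bounded quantifiers -/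

section Induction

variable {M : Type} [lang.Structure M] {m n k : ℕ}

theorem ISig.induction (hI : ISig m M) {P : M → Prop}
    (hP : IsSigmaRel m fun v : Fin 1 → M => P (v 0)) (zero : P 0)
    (succ : ∀ x, P x → P (x + 1)) (x : M) : P x :=
  hI {x | P x} hP.isSigmaDef zero succ x

theorem ISig.mono (hI : ISig n M) (h : m ≤ n) : ISig m M :=
  fun A hA => hI A (hA.isSigmaRel.mono h).isSigmaDef

variable (M) in
/-- The `Σ_m` relations are closed under bounded universal quantification. -/
def ClosedUnderBall (m : ℕ) : Prop :=
  ∀ ⦃k : ℕ⦄ ⦃f : (Fin k → M) → M⦄ ⦃R : (Fin k → M) → M → Prop⦄, IsTermFun f →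
    IsSigmaRel m (fun w : Fin (k + 1) → M => R (fun i => w i.castSucc) (w (Fin.last k))) →
    IsSigmaRel m fun v => ∀ x, x < f v → R v x

theorem ClosedUnderBall.bex (hb : ClosedUnderBall M m) {f : (Fin k → M) → M}
    {R : (Fin k → M) → M → Prop} (hf : IsTermFun f)
    (hR : IsPiRel m fun w : Fin (k + 1) → M => R (fun i => w i.castSucc) (w (Fin.last k))) :
    IsPiRel m fun v => ∃ x, x < f v ∧ R v x :=
  (hb (R := fun v x => ¬R v x) hf hR.not).not.of_iff fun v => by push Not; rfl

variable [Fact (PAm M)]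

/-- A block of existential quantifiers is contracted by bounding all its witnesses at once. -/
theorem ClosedUnderBall.exists_pi_matrix (hb : ClosedUnderBall M m) {R : (Fin k → M) → Prop}
    (hR : IsSigmaRel (m + 1) R) :
    ∃ Q : (Fin k → M) → M → Prop,
      IsPiRel m (fun w : Fin (k + 1) → M => Q (fun i => w i.castSucc) (w (Fin.last k))) ∧
        ∀ v, R v ↔ ∃ w, Q v w := by
  induction hR using IsSigmaRel.succ_induction with
  | @ofPi k R hR =>
    refine ⟨fun v _ => R v, hR.comp fun i => .var i.castSucc, fun v => ?_⟩
    have : Nonempty M := ⟨0⟩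
    exact exists_const M |>.symm
  | @ex k R _ ih =>
    obtain ⟨Q, hQ, hQR⟩ := ih
    refine ⟨fun v u => ∃ x, x < u ∧ ∃ w, w < u ∧ Q (Fin.snoc v x) w,
      hb.bex (.var _) (hb.bex (.var _) ?_), fun v => ?_⟩
    · exact hQ.comp_snoc (.snoc (fun i => .var i.castSucc.castSucc.castSucc) (.var _)) (.var _)
    · have hQR (x : M) : R v x ↔ ∃ w, Q (Fin.snoc v x) w := by
        simpa only [Fin.snoc_castSucc, Fin.snoc_last] using hQR (Fin.snoc v x)
      simp only [hQR]
      constructor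
      · rintro ⟨x, w, hw⟩
        exact ⟨max x w + 1, x, Order.lt_add_one_iff.2 (le_max_left x w), w,
          Order.lt_add_one_iff.2 (le_max_right x w), hw⟩
      · rintro ⟨-, x, -, w, -, hw⟩
        exact ⟨x, w, hw⟩

theorem ISig.collection (hI : ISig (m + 1) M) (hb : ClosedUnderBall M m) {Q : M → M → Prop}
    (hQ : IsPiRel m fun v : Fin 2 → M => Q (v 0) (v 1)) {a : M} (h : ∀ x, x < a → ∃ w, Q x w) :
    ∃ b, ∀ x, x < a → ∃ w, w < b ∧ Q x w := by
  have exists_bound_below (a' : M) : ∃ b, ∀ x, x < a' → x < a → ∃ w, w < b ∧ Q x w := by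
    induction a' using hI.induction with
    | hP =>
      refine .ex m (.ofPi (.ball (.var _) (.imp (.ofDelta0 _ (.lt (.var _) (.const _)))
        (hb.bex (.var _) ?_))))
      exact hQ.comp (g := ![_, _]) (Fin.forall_fin_two.2 ⟨.var _, .var _⟩)
    | zero => exact ⟨0, fun x hx => absurd hx not_lt_zero⟩
    | succ c hc =>
      obtain ⟨b, hbc⟩ := hc
      by_cases hca : c < a
      · obtain ⟨w, hw⟩ := h c hca
        refine ⟨max b (w + 1), fun x hx hxa => ?_⟩
        rcases (Order.lt_add_one_iff.1 hx).lt_or_eq with hx | rfl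
        · obtain ⟨w', hw', hQ⟩ := hbc x hx hxa
          exact ⟨w', lt_max_of_lt_left hw', hQ⟩
        · exact ⟨w, lt_max_of_lt_right (lt_add_one _), hw⟩
      · exact ⟨b, fun x _ hxa => hbc x (hxa.trans_le (not_lt.1 hca)) hxa⟩
  obtain ⟨b, hba⟩ := exists_bound_below a
  exact ⟨b, fun x hx => hba x hx hx⟩

theorem ISig.closedUnderBall (hI : ISig n M) (h : m ≤ n) : ClosedUnderBall M m := by
  induction m with
  | zero => exact fun _ _ _ hf hR => .ofDelta0 0 (.ball hf hR.isDelta0Rel)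
  | succ m ih =>
    intro k f R hf hR
    have hb : ClosedUnderBall M m := ih (Nat.le_of_succ_le h)
    obtain ⟨Q, hQ, hQR⟩ := hb.exists_pi_matrix hR
    refine IsSigmaRel.of_iff (R := fun v => ∃ b, ∀ x, x < f v → ∃ w, w < b ∧ Q (Fin.snoc v x) w)
      (.ex m (.ofPi (.ball hf.comp_castSucc (hb.bex (.var _) ?_)))) fun v => ?_
    · exact hQ.comp_snoc (.snoc (fun i => .var i.castSucc.castSucc.castSucc) (.var _)) (.var _)
    · have hQR (x : M) : R v x ↔ ∃ w, Q (Fin.snoc v x) w := by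
        simpa only [Fin.snoc_castSucc, Fin.snoc_last] using hQR (Fin.snoc v x)
      simp only [hQR]
      refine ⟨(hI.mono h).collection hb ?_, fun ⟨b, hbx⟩ x hx => ?_⟩
      · exact hQ.comp_snoc (.snoc (fun i => .const (v i)) (.var _)) (.var _)
      · obtain ⟨w, -, hw⟩ := hbx x hx
        exact ⟨w, hw⟩

theorem ISig.ball (hI : ISig m M) {f : (Fin k → M) → M} {R : (Fin k → M) → M → Prop}
    (hf : IsTermFun f)
    (hR : IsSigmaRel m fun w : Fin (k + 1) → M => R (fun i => w i.castSucc) (w (Fin.last k))) :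
    IsSigmaRel m fun v => ∀ x, x < f v → R v x :=
  hI.closedUnderBall le_rfl hf hR

theorem ISig.bex (hI : ISig m M) {f : (Fin k → M) → M} {R : (Fin k → M) → M → Prop}
    (hf : IsTermFun f)
    (hR : IsPiRel m fun w : Fin (k + 1) → M => R (fun i => w i.castSucc) (w (Fin.last k))) :
    IsPiRel m fun v => ∃ x, x < f v ∧ R v x :=
  (hI.closedUnderBall le_rfl).bex hf hR

theorem ISig.exists_pi_matrix (hI : ISig m M) {R : M → M → Prop}
    (hR : IsSigmaRel (m + 1) fun v : Fin 2 → M => R (v 0) (v 1)) :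
    ∃ θ : M → M → M → Prop, IsPiRel m (fun v : Fin 3 → M => θ (v 0) (v 1) (v 2)) ∧
      ∀ x y, R x y ↔ ∃ w, θ x y w := by
  obtain ⟨Q, hQ, hQR⟩ := (hI.closedUnderBall le_rfl).exists_pi_matrix hR
  exact ⟨fun x y => Q ![x, y], hQ.comp_snoc (g := fun i v => ![v 0, v 1] i)
    (Fin.forall_fin_two.2 ⟨.var 0, .var 1⟩) (.var 2), fun x y => hQR ![x, y]⟩

theorem IsDelta0Rel.le {f g : (Fin k → M) → M} (hf : IsTermFun f) (hg : IsTermFun g) :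
    IsDelta0Rel fun v => f v ≤ g v :=
  (lt hg hf).not.of_iff fun _ => not_lt.symm

theorem IsDelta0Rel.bex_le {f : (Fin k → M) → M} {R : (Fin k → M) → M → Prop}
    (hf : IsTermFun f)
    (hR : IsDelta0Rel fun w : Fin (k + 1) → M => R (fun i => w i.castSucc) (w (Fin.last k))) :
    IsDelta0Rel fun v => ∃ x, x ≤ f v ∧ R v x :=
  (bex (hf.add (.const 1)) hR).of_iff fun v => by simp only [Order.lt_add_one_iff]

theorem IsDelta0Rel.ball_le {f : (Fin k → M) → M} {R : (Fin k → M) → M → Prop}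
    (hf : IsTermFun f)
    (hR : IsDelta0Rel fun w : Fin (k + 1) → M => R (fun i => w i.castSucc) (w (Fin.last k))) :
    IsDelta0Rel fun v => ∀ x, x ≤ f v → R v x :=
  (ball (hf.add (.const 1)) hR).of_iff fun v => by simp only [Order.lt_add_one_iff]

theorem ISig.exists_isLeast_of_pi (hI : ISig m M) {P : M → Prop}
    (hdef : IsPiRel m fun v : Fin 1 → M => P (v 0)) (hP : ∃ x, P x) : ∃ x, IsLeast {x | P x} x := by
  obtain ⟨a, ha⟩ := hP
  by_contra no_least
  have none_below (x : M) : ∀ y, y < x → ¬P y := by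
    induction x using hI.induction with
    | hP => exact hI.ball (R := fun _ y => ¬P y) (.var _) (hdef.comp fun _ => .var _).not
    | zero => exact fun _ hy => absurd hy not_lt_zero
    | succ x ih =>
      intro y hy hPy
      refine no_least ⟨y, hPy, fun z hPz => ?_⟩
      exact (Order.lt_add_one_iff.1 hy).trans (not_lt.1 fun hzx => ih z hzx hPz)
  exact none_below (a + 1) a (lt_add_one a) ha

theorem ISig.isSigmaRel_isLeast (hI : ISig m M) {f : (Fin k → M) → M}
    {R : (Fin k → M) → M → Prop} (hf : IsTermFun f)
    (hR : IsPiRel m fun w : Fin (k + 1) → M => R (fun i => w i.castSucc) (w (Fin.last k))) :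
    IsSigmaRel (m + 1) fun v => IsLeast {x | R v x} (f v) := by
  have hmem : IsSigmaRel (m + 1) fun v => R v (f v) := .ofPi (hR.comp_snoc (fun i => .var i) hf)
  have hlow : IsSigmaRel m fun v => ∀ x, x < f v → ¬R v x := hI.ball hf hR.not
  refine (hmem.and hlow.succ_mono).of_iff fun v => and_congr_right fun _ => ?_
  exact forall_congr' fun x => (imp_congr_right fun _ => not_lt.symm).trans imp_not_comm

end Induction

section Substitution

variable {M : Type} [lang.Structure M] {k m : ℕ} {f g d e : (Fin k → M) → M}

theorem IsDelta0Rel.rel₁ {R : M → Prop} (hR : IsDelta0Rel fun v : Fin 1 → M => R (v 0))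
    (hf : IsTermFun f) : IsDelta0Rel fun v => R (f v) :=
  hR.comp fun _ => hf

theorem IsDelta0Rel.rel₂ {R : M → M → Prop}
    (hR : IsDelta0Rel fun v : Fin 2 → M => R (v 0) (v 1))
    (hf : IsTermFun f) (hg : IsTermFun g) : IsDelta0Rel fun v => R (f v) (g v) :=
  hR.comp (g := ![f, g]) (Fin.forall_fin_two.2 ⟨hf, hg⟩)

theorem IsDelta0Rel.rel₃ {R : M → M → M → Prop}
    (hR : IsDelta0Rel fun v : Fin 3 → M => R (v 0) (v 1) (v 2))
    (hf : IsTermFun f) (hg : IsTermFun g) (hd : IsTermFun d) :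
    IsDelta0Rel fun v => R (f v) (g v) (d v) :=
  hR.comp (g := ![f, g, d]) (Fin.forall_fin_succ.2 ⟨hf, Fin.forall_fin_two.2 ⟨hg, hd⟩⟩)

theorem IsDelta0Rel.rel₄ {R : M → M → M → M → Prop}
    (hR : IsDelta0Rel fun v : Fin 4 → M => R (v 0) (v 1) (v 2) (v 3))
    (hf : IsTermFun f) (hg : IsTermFun g) (hd : IsTermFun d) (he : IsTermFun e) :
    IsDelta0Rel fun v => R (f v) (g v) (d v) (e v) :=
  hR.comp (g := ![f, g, d, e]) (Fin.forall_fin_succ.2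
    ⟨hf, Fin.forall_fin_succ.2 ⟨hg, Fin.forall_fin_two.2 ⟨hd, he⟩⟩⟩)

theorem IsSigmaRel.rel₁ {R : M → Prop} (hR : IsSigmaRel m fun v : Fin 1 → M => R (v 0))
    (hf : IsTermFun f) : IsSigmaRel m fun v => R (f v) :=
  hR.comp fun _ => hf

theorem IsSigmaRel.rel₂ {R : M → M → Prop}
    (hR : IsSigmaRel m fun v : Fin 2 → M => R (v 0) (v 1))
    (hf : IsTermFun f) (hg : IsTermFun g) : IsSigmaRel m fun v => R (f v) (g v) :=
  hR.comp (g := ![f, g]) (Fin.forall_fin_two.2 ⟨hf, hg⟩)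

theorem IsSigmaRel.rel₄ {R : M → M → M → M → Prop}
    (hR : IsSigmaRel m fun v : Fin 4 → M => R (v 0) (v 1) (v 2) (v 3))
    (hf : IsTermFun f) (hg : IsTermFun g) (hd : IsTermFun d) (he : IsTermFun e) :
    IsSigmaRel m fun v => R (f v) (g v) (d v) (e v) :=
  hR.comp (g := ![f, g, d, e]) (Fin.forall_fin_succ.2
    ⟨hf, Fin.forall_fin_succ.2 ⟨hg, Fin.forall_fin_two.2 ⟨hd, he⟩⟩⟩)

theorem IsPiRel.rel₂ {R : M → M → Prop}
    (hR : IsPiRel m fun v : Fin 2 → M => R (v 0) (v 1))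
    (hf : IsTermFun f) (hg : IsTermFun g) : IsPiRel m fun v => R (f v) (g v) :=
  hR.comp (g := ![f, g]) (Fin.forall_fin_two.2 ⟨hf, hg⟩)

theorem IsPiRel.rel₃ {R : M → M → M → Prop}
    (hR : IsPiRel m fun v : Fin 3 → M => R (v 0) (v 1) (v 2))
    (hf : IsTermFun f) (hg : IsTermFun g) (hd : IsTermFun d) :
    IsPiRel m fun v => R (f v) (g v) (d v) :=
  hR.comp (g := ![f, g, d]) (Fin.forall_fin_succ.2 ⟨hf, Fin.forall_fin_two.2 ⟨hg, hd⟩⟩)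

end Substitution

/-! ### Coding of sets and sequences -/

section Coding

variable {M : Type} [lang.Structure M]

theorem isDelta0Rel_isPairC {k : ℕ} {f g d : (Fin k → M) → M}
    (hf : IsTermFun f) (hg : IsTermFun g) (hd : IsTermFun d) :
    IsDelta0Rel fun v => IsPairC (f v) (g v) (d v) :=
  .eq (hf.add hf) (((hg.add hd).mul ((hg.add hd).add (.const 1))).add (hd.add hd))

variable [Fact (PAm M)]

/-- `z` belongs to the set coded by `a` with respect to the base `b`: the set is read off from
which of the pairwise coprime moduli `(z + 1) * b + 1` of the β-function divide `a`. -/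
def CodeMem (a b z : M) : Prop := (z + 1) * b + 1 ∣ a

/-- `b` is a positive common multiple of `1, …, y`, so that the β-moduli `(i + 1) * b + 1` with
`i < y` are pairwise coprime. -/
structure IsCommonMultiple (b y : M) : Prop where
  pos : 0 < b
  dvd : ∀ i, 0 < i → i ≤ y → i ∣ b

/-- A base `b` and a bound `K` such that definable subsets of `[0, y)` have `b`-codes below `K`:
the whole of `[0, y)` has a positive code below `K`. -/
structure IsCodeFrame (b K y : M) : Prop extends IsCommonMultiple b y where
  full : ∃ A, A < K ∧ 0 < A ∧ ∀ z, z < y → CodeMem A b z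

theorem dvd_of_dvd_add {m x y : M} (hm : 0 < m) (hxy : m ∣ x + y) (hx : m ∣ x) : m ∣ y := by
  obtain ⟨p, rfl⟩ := hx
  obtain ⟨q, hq⟩ := hxy
  have hpq : p ≤ q := le_of_mul_le_mul_left (hq ▸ le_self_add) hm
  obtain ⟨t, rfl⟩ := exists_add_of_le hpq
  exact ⟨t, add_left_cancel (hq.trans (mul_add m p t))⟩

theorem dvd_of_dvd_mul_of_dvd_base {b d j c : M} (hd : d ∣ b) (h : (j + 1) * b + 1 ∣ d * c) :
    (j + 1) * b + 1 ∣ c := by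
  obtain ⟨e, rfl⟩ := hd
  have hmul : (j + 1) * (d * e) + 1 ∣ (j + 1) * e * (d * c) := h.mul_left _
  exact dvd_of_dvd_add (by simp) (x := (j + 1) * e * (d * c)) ⟨c, by ring⟩ hmul

/-- The β-moduli at two places differ by a multiple of `b` times the distance of the places. -/
theorem IsCommonMultiple.dvd_of_dvd_mul {b y i j c : M} (hb : IsCommonMultiple b y) (hi : i < y)
    (hj : j < y) (hij : i ≠ j) (h : (j + 1) * b + 1 ∣ ((i + 1) * b + 1) * c) :
    (j + 1) * b + 1 ∣ c := by
  have le_of_add {d i j : M} (hj : j < y) (hd : j = i + d + 1) : d + 1 ≤ y :=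
    (hd ▸ add_assoc i d 1 ▸ le_add_self : d + 1 ≤ j).trans hj.le
  rcases lt_or_gt_of_ne hij with hij | hij
  · obtain ⟨d, hd⟩ := lt_iff_exists_add_add_one.1 hij
    refine dvd_of_dvd_mul_of_dvd_base (hb.dvd (d + 1) (by simp) (le_of_add hj hd)) ?_
    refine dvd_of_dvd_add (by simp) (x := (i + 1) * ((j + 1) * b + 1) * c) ?_
      ⟨(i + 1) * c, by ring⟩
    exact (h.mul_left (j + 1)).trans (dvd_of_eq (by rw [hd]; ring))
  · obtain ⟨d, hd⟩ := lt_iff_exists_add_add_one.1 hij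
    refine dvd_of_dvd_mul_of_dvd_base (hb.dvd (d + 1) (by simp) (le_of_add hi hd)) ?_
    refine dvd_of_dvd_add (by simp) (x := (j + 1) * (((i + 1) * b + 1) * c)) ?_ (h.mul_left _)
    exact ⟨(i + 1) * c, by rw [hd]; ring⟩

theorem isDelta0Rel_dvd {k : ℕ} {f g : (Fin k → M) → M} (hf : IsTermFun f) (hg : IsTermFun g) :
    IsDelta0Rel fun v => f v ∣ g v := by
  refine (IsDelta0Rel.bex_le hg (.eq hg.comp_castSucc
    (.mul hf.comp_castSucc (.var (Fin.last k))))).of_iff fun v =>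
      ⟨fun ⟨c, hc⟩ => ?_, fun ⟨c, _, hc⟩ => ⟨c, hc⟩⟩
  rcases eq_zero_or_exists_add_one (f v) with hf0 | ⟨d, hd⟩
  · exact ⟨0, zero_le, by rw [hc, hf0, zero_mul, zero_mul]⟩
  · exact ⟨c, by rw [hc, hd, add_one_mul]; exact le_add_self, hc⟩

theorem isDelta0Rel_codeMem {k : ℕ} {f g e : (Fin k → M) → M} (hf : IsTermFun f)
    (hg : IsTermFun g) (he : IsTermFun e) : IsDelta0Rel fun v => CodeMem (f v) (g v) (e v) :=
  isDelta0Rel_dvd (((he.add (.const 1)).mul hg).add (.const 1)) hf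

/-- The least positive number divisible by all the moduli belonging to `X` is a code. -/
theorem ISig.exists_code_of_sigma {n : ℕ} (hI : ISig n M) {X : M → Prop}
    (hX : IsSigmaRel n fun v : Fin 1 → M => X (v 0)) {b K y : M} (hb : IsCodeFrame b K y) :
    ∃ a, a < K ∧ ∀ z, z < y → (CodeMem a b z ↔ X z) := by
  obtain ⟨A, hAK, hA, hAy⟩ := hb.full
  have hdef : IsPiRel n fun v : Fin 1 → M => 0 < v 0 ∧ ∀ z, z < y → X z → CodeMem (v 0) b z :=
    .and (.ofDelta0 _ (.lt (.const _) (.var _))) <| .ball (.const _) <|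
      .imp (hX.rel₁ (.var _)) <| .ofDelta0 _ <| isDelta0Rel_codeMem (.var _) (.const _) (.var _)
  have hAX : 0 < A ∧ ∀ z, z < y → X z → CodeMem A b z := ⟨hA, fun z hz _ => hAy z hz⟩
  obtain ⟨a, ⟨ha, haX⟩, hmin⟩ := hI.exists_isLeast_of_pi
    (P := fun a => 0 < a ∧ ∀ z, z < y → X z → CodeMem a b z) hdef ⟨A, hAX⟩
  refine ⟨a, (hmin hAX).trans_lt hAK, fun z hz => ⟨fun ⟨c, hc⟩ => ?_, haX z hz⟩⟩
  by_contra hXz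
  have hc0 : 0 < c := pos_iff_ne_zero.2 fun h0 => ha.ne' (by rw [hc, h0, mul_zero])
  have hca : c < a := by
    rw [hc]
    exact lt_mul_of_one_lt_left hc0 (by simp [hb.pos])
  refine hca.not_ge (hmin ⟨hc0, fun w hw hXw => hb.dvd_of_dvd_mul hz hw ?_ (hc ▸ haX w hw hXw)⟩)
  rintro rfl
  exact hXz hXw

theorem ISig.exists_code_of_pi {n : ℕ} (hI : ISig n M) {X : M → Prop}
    (hX : IsPiRel n fun v : Fin 1 → M => X (v 0)) {b K y : M} (hb : IsCodeFrame b K y) :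
    ∃ a, a < K ∧ ∀ z, z < y → (CodeMem a b z ↔ X z) := by
  obtain ⟨a', -, ha'⟩ := hI.exists_code_of_sigma (X := fun z => ¬X z) hX.not hb
  obtain ⟨a, haK, ha⟩ := hI.exists_code_of_sigma (X := fun z => ¬CodeMem a' b z)
    (.ofDelta0 _ (isDelta0Rel_codeMem (.const _) (.const _) (.var _)).not) hb
  exact ⟨a, haK, fun z hz => by rw [ha z hz, ha' z hz, not_not]⟩

theorem BetaC.eq {a b i x x' : M} (h : BetaC a b i x) (h' : BetaC a b i x') : x = x' := by
  obtain ⟨hx, q, hq⟩ := h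
  obtain ⟨hx', q', hq'⟩ := h'
  exact (mul_add_inj_of_lt hx hx' (hq.symm.trans hq')).2

theorem IsPairC.sum_le {z x y x' y' : M} (h : IsPairC z x y) (h' : IsPairC z x' y') :
    x' + y' ≤ x + y := by
  by_contra! hlt
  have hz : z + z < z + z :=
    calc z + z = (x + y) * (x + y + 1) + (y + y) := h
      _ ≤ (x + y) * (x + y + 1) + (x + y + (x + y)) := by gcongr <;> exact le_add_self
      _ < (x + y + 1) * (x + y + 1 + 1) := by
        rw [show (x + y + 1) * (x + y + 1 + 1) =
          (x + y) * (x + y + 1) + (x + y + (x + y)) + 1 + 1 by ring]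
        exact (lt_add_one _).trans (lt_add_one _)
      _ ≤ (x' + y') * (x' + y' + 1) + (y' + y') := by
        have hle : x + y + 1 ≤ x' + y' := Order.add_one_le_of_lt hlt
        exact le_add_right (by gcongr)
      _ = z + z := h'.symm
  exact hz.false

theorem IsPairC.inj {z x y x' y' : M} (h : IsPairC z x y) (h' : IsPairC z x' y') :
    x = x' ∧ y = y' := by
  have hsum : x + y = x' + y' := le_antisymm (h'.sum_le h) (h.sum_le h')
  have hdouble : y + y = y' + y' := by
    refine add_left_cancel (a := (x + y) * (x + y + 1)) (h.symm.trans (h'.trans ?_))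
    rw [hsum]
  obtain rfl : y = y' := by
    rw [← two_mul, ← two_mul] at hdouble
    exact mul_left_cancel₀ two_ne_zero hdouble
  exact ⟨add_right_cancel hsum, rfl⟩

theorem IsPairC.left_le {z x y : M} (h : IsPairC z x y) : x ≤ z := by
  have : x + x ≤ z + z := by
    rw [show z + z = _ from h]
    rcases eq_zero_or_exists_add_one x with rfl | ⟨d, rfl⟩
    · simp
    · rw [show (d + 1 + y) * (d + 1 + y + 1) + (y + y) = (d + 1 + (d + 1)) +
        (d * d + d + d * y + y * d + y * y + y + y + y + y + y) by ring]
      exact le_self_add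
  rw [← two_mul, ← two_mul] at this
  exact le_of_mul_le_mul_left this two_pos

theorem IsPairC.right_le {z x y : M} (h : IsPairC z x y) : y ≤ z := by
  have : y + y ≤ z + z := by
    rw [show z + z = _ from h]
    exact le_add_self
  rw [← two_mul, ← two_mul] at this
  exact le_of_mul_le_mul_left this two_pos

theorem SeqAt.eq {s i x x' : M} (h : SeqAt s i x) (h' : SeqAt s i x') : x = x' := by
  obtain ⟨a, b, hs, hx⟩ := h
  obtain ⟨a', b', hs', hx'⟩ := h'
  obtain ⟨rfl, rfl⟩ := hs.inj hs'
  exact hx.eq hx'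

section Delta0

variable {k : ℕ} {f g d e : (Fin k → M) → M}

theorem isDelta0Rel_betaC (hf : IsTermFun f) (hg : IsTermFun g) (hd : IsTermFun d)
    (he : IsTermFun e) : IsDelta0Rel fun v => BetaC (f v) (g v) (d v) (e v) := by
  refine IsDelta0Rel.rel₄ (R := BetaC) (IsDelta0Rel.of_iff (R := fun v =>
    v 3 < (v 2 + 1) * v 1 + 1 ∧ ∃ q, q ≤ v 0 ∧ v 0 = q * ((v 2 + 1) * v 1 + 1) + v 3)
    ?_ fun v => ?_) hf hg hd he
  · apply_rules [IsDelta0Rel.and, IsDelta0Rel.lt, IsDelta0Rel.eq, IsDelta0Rel.bex_le,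
      IsTermFun.add, IsTermFun.mul, IsTermFun.var, IsTermFun.const]
  · refine and_congr_right fun _ => ⟨fun ⟨q, hq⟩ => ⟨q, ?_, hq⟩, fun ⟨q, _, hq⟩ => ⟨q, hq⟩⟩
    rw [hq, mul_add_one, add_right_comm]
    exact le_add_self

theorem isDelta0Rel_seqAt (hf : IsTermFun f) (hg : IsTermFun g) (hd : IsTermFun d) :
    IsDelta0Rel fun v => SeqAt (f v) (g v) (d v) := by
  refine IsDelta0Rel.rel₃ (R := SeqAt) (IsDelta0Rel.of_iff (R := fun v => ∃ a, a ≤ v 0 ∧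
    ∃ b, b ≤ v 0 ∧ IsPairC (v 0) a b ∧ BetaC a b (v 1) (v 2)) ?_ fun v => ?_) hf hg hd
  · exact .bex_le (.var _) <| .bex_le (.var _) <| .and
      (isDelta0Rel_isPairC (.var _) (.var _) (.var _))
      (isDelta0Rel_betaC (.var _) (.var _) (.var _) (.var _))
  · exact ⟨fun ⟨a, b, hs, hx⟩ => ⟨a, hs.left_le, b, hs.right_le, hs, hx⟩,
      fun ⟨a, _, b, _, hs, hx⟩ => ⟨a, b, hs, hx⟩⟩

end Delta0

variable [h1 : Fact (ISig 1 M)]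

theorem exists_isCommonMultiple (y : M) : ∃ b, IsCommonMultiple b y := by
  suffices ∃ b, 0 < b ∧ ∀ i, i ≤ y → 0 < i → i ∣ b by
    obtain ⟨b, hb, hby⟩ := this
    exact ⟨b, hb, fun i hi hiy => hby i hiy hi⟩
  induction y using h1.out.induction with
  | hP =>
    refine .ex 0 (.ofDelta0 _ ?_)
    apply_rules [IsDelta0Rel.and, IsDelta0Rel.ball_le, IsDelta0Rel.imp, IsDelta0Rel.lt,
      isDelta0Rel_dvd, IsTermFun.var, IsTermFun.const]
  | zero => exact ⟨1, one_pos, fun i hi hi0 => absurd hi hi0.not_ge⟩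
  | succ y ih =>
    obtain ⟨b, hb, hby⟩ := ih
    refine ⟨b * (y + 1), mul_pos hb (by simp), fun i hi hi0 => ?_⟩
    rcases hi.lt_or_eq with hi | rfl
    · exact (hby i (Order.lt_add_one_iff.1 hi) hi0).mul_right _
    · exact dvd_mul_left _ _

theorem exists_full_code (b y : M) : ∃ A, 0 < A ∧ ∀ z, z < y → CodeMem A b z := by
  induction y using h1.out.induction with
  | hP =>
    refine .ex 0 (.ofDelta0 _ ?_)
    apply_rules [IsDelta0Rel.and, IsDelta0Rel.ball, IsDelta0Rel.lt, isDelta0Rel_codeMem,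
      IsTermFun.var, IsTermFun.const]
  | zero => exact ⟨1, one_pos, fun i hi => absurd hi not_lt_zero⟩
  | succ y ih =>
    obtain ⟨A, hA, hAy⟩ := ih
    refine ⟨A * ((y + 1) * b + 1), mul_pos hA (by simp), fun z hz => ?_⟩
    rcases (Order.lt_add_one_iff.1 hz).lt_or_eq with hz | rfl
    · exact (hAy z hz).mul_right _
    · exact dvd_mul_left _ _

theorem exists_isCodeFrame (y : M) : ∃ b K, IsCodeFrame b K y := by
  obtain ⟨b, hb⟩ := exists_isCommonMultiple y
  obtain ⟨A, hA, hAy⟩ := exists_full_code b y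
  exact ⟨b, A + 1, hb, A, lt_add_one A, hA, hAy⟩

theorem exists_isPairC (x y : M) : ∃ z, IsPairC z x y := by
  have even_mul_succ (u : M) : ∃ k, u * (u + 1) = k + k := by
    induction u using h1.out.induction with
    | hP =>
      refine .ex 0 (.ofDelta0 _ ?_)
      apply_rules [IsDelta0Rel.eq, IsTermFun.add, IsTermFun.mul, IsTermFun.var, IsTermFun.const]
    | zero => exact ⟨0, by simp⟩
    | succ u ih =>
      obtain ⟨k, hk⟩ := ih
      exact ⟨k + u + 1, by linear_combination hk⟩
  obtain ⟨k, hk⟩ := even_mul_succ (x + y)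
  exact ⟨k + y, by rw [IsPairC, hk, add_add_add_comm]⟩

end Coding

/-! ### Uniformization, sequences and the pigeonhole principle -/

section Uniformization

variable {M : Type} [lang.Structure M] [Fact (PAm M)]

/-- Take the least bound `m` for a value together with a witness, then the least value with a
witness below `m`. -/
theorem ISig.uniformize {n : ℕ} (hI : ISig n M) {R : M → M → Prop}
    (hR : IsSigmaRel (n + 1) fun v : Fin 2 → M => R (v 0) (v 1)) :
    ∃ F : M → M → Prop, IsSigmaRel (n + 1) (fun v : Fin 2 → M => F (v 0) (v 1)) ∧
      (∀ u v, F u v → R u v) ∧ (∀ u v v', F u v → F u v' → v = v') ∧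
      ∀ u v, R u v → ∃ v', F u v' := by
  obtain ⟨θ, hθ, hRθ⟩ := hI.exists_pi_matrix hR
  refine ⟨fun u v => ∃ m, IsLeast {m | ∃ v, v < m ∧ ∃ w, w < m ∧ θ u v w} m ∧
    IsLeast {v | v < m ∧ ∃ w, w < m ∧ θ u v w} v, ?_, ?_, ?_, ?_⟩
  · refine .ex n (.and (hI.isSigmaRel_isLeast (.var _) ?_) (hI.isSigmaRel_isLeast (.var _) ?_))
    · exact hI.bex (.var _) (hI.bex (.var _) (hθ.rel₃ (.var _) (.var _) (.var _)))
    · exact .and (.ofDelta0 n (.lt (.var _) (.var _)))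
        (hI.bex (.var _) (hθ.rel₃ (.var _) (.var _) (.var _)))
  · rintro u v ⟨m, -, ⟨-, w, -, hw⟩, -⟩
    exact (hRθ u v).2 ⟨w, hw⟩
  · rintro u v v' ⟨m, hm, hv⟩ ⟨m', hm', hv'⟩
    obtain rfl := hm.unique hm'
    exact hv.unique hv'
  · intro u v huv
    obtain ⟨w, hw⟩ := (hRθ u v).1 huv
    obtain ⟨m, hm⟩ := hI.exists_isLeast_of_pi
      (P := fun m => ∃ v, v < m ∧ ∃ w, w < m ∧ θ u v w)
      (hI.bex (.var _) (hI.bex (.var _) (hθ.rel₃ (.const _) (.var _) (.var _))))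
      ⟨max v w + 1, v, Order.lt_add_one_iff.2 (le_max_left _ _), w,
        Order.lt_add_one_iff.2 (le_max_right _ _), hw⟩
    obtain ⟨v', hv'⟩ := hI.exists_isLeast_of_pi (P := fun v => v < m ∧ ∃ w, w < m ∧ θ u v w)
      (.and (.ofDelta0 n (.lt (.var _) (.const _)))
        (hI.bex (.const _) (hθ.rel₃ (.const _) (.var _) (.var _)))) hm.1
    exact ⟨v', m, hm, hv'⟩

end Uniformization

section Sequences

variable {M : Type} [lang.Structure M] [Fact (PAm M)]

theorem SeqAt.le {s i u : M} (h : SeqAt s i u) : u ≤ s := by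
  obtain ⟨a, b, hs, -, q, hq⟩ := h
  exact (hq ▸ le_add_self).trans hs.left_le

theorem IsCommonMultiple.exists_inverse {b y i j : M} (hb : IsCommonMultiple b y) (hij : i < j)
    (hj : j < y) : ∃ r s, ((i + 1) * b + 1) * r = 1 + ((j + 1) * b + 1) * s := by
  obtain ⟨d, rfl⟩ := lt_iff_exists_add_add_one.1 hij
  have hdy : d + 1 ≤ y := (add_assoc i d 1 ▸ le_add_self : d + 1 ≤ i + d + 1).trans hj.le
  obtain ⟨e, he⟩ := hb.dvd (d + 1) (by simp) hdy
  obtain ⟨c, hc⟩ : ∃ c, (i + d + 1 + 1) * b = c + 1 :=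
    (eq_zero_or_exists_add_one _).resolve_left (mul_pos (by simp) hb.pos).ne'
  set J := i + d + 1 + 1 with hJ
  have modulus_mul : ((i + 1) * b + 1) * J = (d + 1) + (i + 1) * (J * b + 1) := by rw [hJ]; ring
  have modulus_mul' : ((i + 1) * b + 1) * (J * J * e) = c + 1 + (i + 1) * J * e * (J * b + 1) := by
    linear_combination J * e * modulus_mul + J * he.symm + hc
  refine ⟨J * J * e * (c + 1), (i + 1) * J * e * (c + 1) + c, ?_⟩
  linear_combination (c + 1) * modulus_mul' + c * hc.symm

variable [h1 : Fact (ISig 1 M)]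

theorem IsCommonMultiple.exists_unit {b y j : M} (hb : IsCommonMultiple b y) (hj : j < y) :
    ∃ P u q, (∀ i, i < j → (i + 1) * b + 1 ∣ P) ∧ P * u = 1 + ((j + 1) * b + 1) * q := by
  suffices ∀ k, ∃ P u q, (∀ i, i < k → i < j → (i + 1) * b + 1 ∣ P) ∧
      P * u = 1 + ((j + 1) * b + 1) * q by
    obtain ⟨P, u, q, hP, hu⟩ := this j
    exact ⟨P, u, q, fun i hi => hP i hi hi, hu⟩
  intro k
  induction k using h1.out.induction with
  | hP =>
    refine .ex 0 (.ex 0 (.ex 0 (.ofDelta0 _ ?_)))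
    apply_rules (maxDepth := 1000) [IsDelta0Rel.and, IsDelta0Rel.ball, IsDelta0Rel.imp,
      IsDelta0Rel.eq, IsDelta0Rel.lt, isDelta0Rel_dvd, IsTermFun.add, IsTermFun.mul,
      IsTermFun.var, IsTermFun.const]
  | zero => exact ⟨1, 1, 0, fun i hi => absurd hi not_lt_zero, by ring⟩
  | succ k ih =>
    obtain ⟨P, u, q, hP, hq⟩ := ih
    by_cases hk : k < j
    · obtain ⟨r, s, hrs⟩ := hb.exists_inverse hk hj
      refine ⟨P * ((k + 1) * b + 1), u * r, q + s + ((j + 1) * b + 1) * q * s, fun i hi hij => ?_,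
        ?_⟩
      · rcases (Order.lt_add_one_iff.1 hi).lt_or_eq with hi | rfl
        · exact (hP i hi hij).mul_right _
        · exact dvd_mul_left _ _
      · calc P * ((k + 1) * b + 1) * (u * r) = P * u * (((k + 1) * b + 1) * r) := by ring
          _ = 1 + ((j + 1) * b + 1) * (q + s + ((j + 1) * b + 1) * q * s) := by rw [hq, hrs]; ring
    · exact ⟨P, u, q, fun i _ hij => hP i (hij.trans_le (not_lt.1 hk)) hij, hq⟩

/-- The Chinese remainder step: adding a multiple of the earlier moduli adjusts one remainder. -/
theorem IsCommonMultiple.exists_betaC_append {b y j v : M} (hb : IsCommonMultiple b y) (hj : j < y)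
    (hv : v < (j + 1) * b + 1) (a : M) :
    ∃ a', (∀ i, i < j → ∀ u, BetaC a b i u → BetaC a' b i u) ∧ BetaC a' b j v := by
  obtain ⟨P, u, q, hP, hu⟩ := hb.exists_unit hj
  refine ⟨a + P * u * (v + a * ((j + 1) * b)), fun i hi x ⟨hx, q', hq'⟩ => ⟨hx, ?_⟩, hv, ?_⟩
  · obtain ⟨p, rfl⟩ := hP i hi
    exact ⟨q' + p * u * (v + a * ((j + 1) * b)), by linear_combination hq'⟩
  · exact ⟨a + q * (v + a * ((j + 1) * b)), by rw [hu]; ring⟩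

theorem exists_seq {g : M → M → Prop} (hg : IsDelta0Rel fun v : Fin 2 → M => g (v 0) (v 1))
    (l B : M) (hgB : ∀ i, i < l → ∃ v, v < B ∧ g i v) :
    ∃ s, ∀ i, i < l → ∃ v, g i v ∧ SeqAt s i v := by
  obtain ⟨c, hc⟩ := exists_isCommonMultiple l
  set b := c * (B + 1)
  have hb : IsCommonMultiple b l :=
    ⟨mul_pos hc.pos (by simp), fun i hi hil => (hc.dvd i hi hil).mul_right _⟩
  have lt_modulus {i v : M} (hv : v < B) : v < (i + 1) * b + 1 :=
    calc v < B + 1 := hv.trans (lt_add_one B)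
      _ ≤ b := le_mul_of_one_le_left zero_le (Order.one_le_iff_pos.2 hc.pos)
      _ ≤ (i + 1) * b := le_mul_of_one_le_left zero_le le_add_self
      _ ≤ (i + 1) * b + 1 := le_self_add
  have exists_base (j : M) : ∃ a, ∀ i, i < j → i < l → ∃ v, v < B ∧ g i v ∧ BetaC a b i v := by
    induction j using h1.out.induction with
    | hP =>
      exact .ex 0 <| .ofDelta0 _ <| .ball (.var _) <| .imp (.lt (.var _) (.const _)) <|
        .bex (.const _) <| .and (hg.rel₂ (.var _) (.var _)) <|
          isDelta0Rel_betaC (.var _) (.const _) (.var _) (.var _)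
    | zero => exact ⟨0, fun i hi => absurd hi not_lt_zero⟩
    | succ j ih =>
      obtain ⟨a, ha⟩ := ih
      by_cases hj : j < l
      · obtain ⟨v, hv, hgv⟩ := hgB j hj
        obtain ⟨a', ha', hav⟩ := hb.exists_betaC_append hj (lt_modulus hv) a
        refine ⟨a', fun i hi hil => ?_⟩
        rcases (Order.lt_add_one_iff.1 hi).lt_or_eq with hi | rfl
        · obtain ⟨v', hv', hgv', hav'⟩ := ha i hi hil
          exact ⟨v', hv', hgv', ha' i hi v' hav'⟩
        · exact ⟨v, hv, hgv, hav⟩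
      · exact ⟨a, fun i _ hil => ha i (hil.trans_le (not_lt.1 hj)) hil⟩
  obtain ⟨a, ha⟩ := exists_base l
  obtain ⟨s, hs⟩ := exists_isPairC a b
  refine ⟨s, fun i hi => ?_⟩
  obtain ⟨v, -, hgv, hav⟩ := ha i hi hi
  exact ⟨v, hgv, a, b, hs, hav⟩

theorem exists_seq_append {s T : M} (hs : ∀ t, t < T → ∃ u, SeqAt s t u) (p : M) :
    ∃ s', (∀ t, t < T → ∀ u, SeqAt s' t u ↔ SeqAt s t u) ∧ SeqAt s' T p := by
  obtain ⟨s', hs'⟩ := exists_seq (g := fun t u => t < T ∧ SeqAt s t u ∨ t = T ∧ u = p)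
    (.or (.and (.lt (.var _) (.const _)) (isDelta0Rel_seqAt (.const _) (.var _) (.var _)))
      (.and (.eq (.var _) (.const _)) (.eq (.var _) (.const _)))) (T + 1) (s + p + 1) fun t ht => by
        rcases (Order.lt_add_one_iff.1 ht).lt_or_eq with ht | rfl
        · obtain ⟨u, hu⟩ := hs t ht
          exact ⟨u, Order.lt_add_one_iff.2 (hu.le.trans le_self_add), .inl ⟨ht, hu⟩⟩
        · exact ⟨p, Order.lt_add_one_iff.2 le_add_self, .inr ⟨rfl, rfl⟩⟩
  refine ⟨s', fun t ht u => ?_, ?_⟩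
  · obtain ⟨v, ⟨-, hv⟩ | ⟨rfl, -⟩, hv'⟩ := hs' t (ht.trans (lt_add_one T))
    · exact ⟨fun hu => hu.eq hv' ▸ hv, fun hu => hu.eq hv ▸ hv'⟩
    · exact absurd ht (lt_irrefl t)
  · obtain ⟨v, ⟨hT, -⟩ | ⟨-, rfl⟩, hv⟩ := hs' T (lt_add_one T)
    · exact absurd hT (lt_irrefl T)
    · exact hv

end Sequences

section Enumeration

variable {M : Type} [lang.Structure M]

/-- The first `l` entries of the sequence coded by `s` form a strictly increasing list of
elements of `X` below `y`. -/
def IsEnumBelow (X : M → Prop) (s l y : M) : Prop :=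
  ∀ r, r < l → ∃ z, z < y ∧ X z ∧ SeqAt s r z ∧ ∀ r', r' < r → ∃ z', z' < z ∧ SeqAt s r' z'

variable [Fact (PAm M)]

theorem IsEnumBelow.mono {X : M → Prop} {s l y y' : M} (h : IsEnumBelow X s l y) (hy : y ≤ y') :
    IsEnumBelow X s l y' := by
  intro r hr
  obtain ⟨z, hz, hzr⟩ := h r hr
  exact ⟨z, hz.trans_le hy, hzr⟩

variable [Fact (ISig 1 M)]

theorem IsEnumBelow.exists_append {X : M → Prop} {s l y : M} (h : IsEnumBelow X s l y)
    (hy : X y) : ∃ s', IsEnumBelow X s' (l + 1) (y + 1) ∧ SeqAt s' l y ∧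
      ∀ r, r < l → ∀ z, SeqAt s r z → SeqAt s' r z := by
  obtain ⟨s', hs', hl⟩ := exists_seq_append (s := s) (T := l) (fun r hr => by
    obtain ⟨z, -, -, hz, -⟩ := h r hr
    exact ⟨z, hz⟩) y
  refine ⟨s', fun r hr => ?_, hl, fun r hr z => (hs' r hr z).2⟩
  rcases (Order.lt_add_one_iff.1 hr).lt_or_eq with hr | rfl
  · obtain ⟨z, hz, hXz, hzr, hlow⟩ := h r hr
    refine ⟨z, hz.trans (lt_add_one y), hXz, (hs' r hr z).2 hzr, fun r' hr' => ?_⟩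
    obtain ⟨z', hz', hzr'⟩ := hlow r' hr'
    exact ⟨z', hz', (hs' r' (hr'.trans hr) z').2 hzr'⟩
  · refine ⟨y, lt_add_one y, hy, hl, fun r' hr' => ?_⟩
    obtain ⟨z, hz, -, hzr, -⟩ := h r' hr'
    exact ⟨z, hz, (hs' r' hr' z).2 hzr⟩

theorem IsEnumBelow.exists_codesFinset {X : M → Prop} {s l y : M} (h : IsEnumBelow X s l y) :
    ∃ c H, CodesFinset c H l ∧ ∀ z ∈ H, z < y ∧ X z := by
  obtain ⟨c, hc⟩ := exists_isPairC l s
  refine ⟨c, {z | ∃ r, r < l ∧ SeqAt s r z}, ⟨s, hc, fun r hr => ?_, ?_, fun z => Iff.rfl⟩, ?_⟩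
  · obtain ⟨z, -, -, hz, -⟩ := h r hr
    exact ⟨z, ⟨r, hr, hz⟩, hz⟩
  · intro i j u v hij hj hu hv
    obtain ⟨z, -, -, hz, hlow⟩ := h j hj
    obtain ⟨z', hz', hzi⟩ := hlow i hij
    rwa [hu.eq hzi, hv.eq hz]
  · rintro z ⟨r, hr, hz⟩
    obtain ⟨z', hz'y, hXz', hz', -⟩ := h r hr
    rw [hz.eq hz']
    exact ⟨hz'y, hXz'⟩

theorem exists_codesFinset_or_seq {X : M → Prop} (hX : IsDelta0Rel fun v : Fin 1 → M => X (v 0))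
    (x y : M) : (∃ c H, CodesFinset c H x ∧ ∀ z ∈ H, z < y ∧ X z) ∨
      ∃ s, ∀ z, z < y → X z → ∃ r, r < x ∧ SeqAt s r z := by
  have exists_enum : ∃ s l, l ≤ x ∧ IsEnumBelow X s l y ∧
      (l < x → ∀ z, z < y → X z → ∃ r, r < l ∧ SeqAt s r z) := by
    induction y using (Fact.out : ISig 1 M).induction with
    | hP =>
      refine .ex 0 <| .ex 0 <| .ofDelta0 _ <| .and (.le (.var _) (.const _)) <| .and ?_ <|
        .imp (.lt (.var _) (.const _)) <| .ball (.var _) <| .imp (hX.rel₁ (.var _)) <|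
        .bex (.var _) <| isDelta0Rel_seqAt (.var _) (.var _) (.var _)
      exact .ball (.var _) <| .bex (.var _) <| .and (hX.rel₁ (.var _)) <|
        .and (isDelta0Rel_seqAt (.var _) (.var _) (.var _)) <|
        .ball (.var _) <| .bex (.var _) <| isDelta0Rel_seqAt (.var _) (.var _) (.var _)
    | zero =>
      exact ⟨0, 0, zero_le, fun r hr => absurd hr not_lt_zero, fun _ z hz => absurd hz not_lt_zero⟩
    | succ y ih =>
      obtain ⟨s, l, hl, henum, hall⟩ := ih
      by_cases hy : l < x ∧ X y
      · obtain ⟨s', henum', hly, hs'⟩ := henum.exists_append hy.2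
        refine ⟨s', l + 1, Order.add_one_le_of_lt hy.1, henum', fun _ z hz hXz => ?_⟩
        rcases (Order.lt_add_one_iff.1 hz).lt_or_eq with hz | rfl
        · obtain ⟨r, hr, hrz⟩ := hall hy.1 z hz hXz
          exact ⟨r, hr.trans (lt_add_one l), hs' r hr z hrz⟩
        · exact ⟨l, lt_add_one l, hly⟩
      · refine ⟨s, l, hl, henum.mono le_self_add, fun hlx z hz hXz => ?_⟩
        refine hall hlx z ((Order.lt_add_one_iff.1 hz).lt_of_ne ?_) hXz
        rintro rfl
        exact hy ⟨hlx, hXz⟩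
  obtain ⟨s, l, hl, henum, hall⟩ := exists_enum
  rcases hl.lt_or_eq with hl | rfl
  · refine .inr ⟨s, fun z hz hXz => ?_⟩
    obtain ⟨r, hr, hrz⟩ := hall hl z hz hXz
    exact ⟨r, hr.trans hl, hrz⟩
  · exact .inl henum.exists_codesFinset

end Enumeration

section Pigeonhole

variable {M : Type} [lang.Structure M]

/-- `R` sends every element of `[0, y)` to at least one element of `[0, x)`, and no two elements
of `[0, y)` to the same one: a multivalued injection. -/
structure InjectsBelow (R : M → M → Prop) (y x : M) : Prop where
  total : ∀ i, i < y → ∃ j, j < x ∧ R i j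
  inj : ∀ j, j < x → ∀ i, i < y → ∀ i', i' < y → R i j → R i' j → i = i'

theorem InjectsBelow.congr {R S : M → M → Prop} {y x : M} (h : InjectsBelow R y x)
    (hRS : ∀ i, i < y → ∀ j, j < x → (R i j ↔ S i j)) : InjectsBelow S y x where
  total i hi := by
    obtain ⟨j, hj, hR⟩ := h.total i hi
    exact ⟨j, hj, (hRS i hi j hj).1 hR⟩
  inj j hj i hi i' hi' hS hS' :=
    h.inj j hj i hi i' hi' ((hRS i hi j hj).2 hS) ((hRS i' hi' j hj).2 hS')

variable [Fact (PAm M)]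

theorem InjectsBelow.rerouted {R : M → M → Prop} {N : M} (h : InjectsBelow R (N + 1 + 1) (N + 1)) :
    InjectsBelow (fun i j => R i j ∨ R i N ∧ R (N + 1) j) (N + 1) N where
  total i hi := by
    have hi' : i < N + 1 + 1 := hi.trans (lt_add_one _)
    obtain ⟨j, hj, hij⟩ := h.total i hi'
    rcases (Order.lt_add_one_iff.1 hj).lt_or_eq with hj | rfl
    · exact ⟨j, hj, .inl hij⟩
    · obtain ⟨j', hj', hNj'⟩ := h.total (j + 1) (lt_add_one _)
      refine ⟨j', (Order.lt_add_one_iff.1 hj').lt_of_ne ?_, .inr ⟨hij, hNj'⟩⟩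
      rintro rfl
      exact hi.ne (h.inj j' hj i hi' _ (lt_add_one _) hij hNj')
  inj j hj i hi i' hi' hij hij' := by
    have hj' : j < N + 1 := hj.trans (lt_add_one N)
    have hiN : i < N + 1 + 1 := hi.trans (lt_add_one _)
    have hiN' : i' < N + 1 + 1 := hi'.trans (lt_add_one _)
    rcases hij with hij | ⟨hiN0, hNj⟩ <;> rcases hij' with hij' | ⟨hiN0', hNj'⟩
    · exact h.inj j hj' i hiN i' hiN' hij hij'
    · exact absurd (h.inj j hj' i hiN _ (lt_add_one _) hij hNj') hi.ne
    · exact absurd (h.inj j hj' i' hiN' _ (lt_add_one _) hij' hNj) hi'.ne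
    · exact h.inj N (lt_add_one N) i hiN i' hiN' hiN0 hiN0'

theorem ISig.exists_table {n : ℕ} (hI : ISig n M) {R : M → M → Prop}
    (hR : IsPiRel n fun v : Fin 2 → M => R (v 0) (v 1)) {b L I K : M}
    (hb : IsCodeFrame b L (I * K)) :
    ∃ a, a < L ∧ ∀ i, i < I → ∀ j, j < K → (CodeMem a b (i * K + j) ↔ R i j) := by
  obtain ⟨a, haL, ha⟩ := hI.exists_code_of_pi
    (X := fun u => ∃ i, i < I ∧ ∃ j, j < K ∧ u = i * K + j ∧ R i j)
    (hI.bex (.const _) <| hI.bex (.const _) <| .and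
      (.ofDelta0 n (.eq (.var _) (((IsTermFun.var _).mul (.const _)).add (.var _))))
      (hR.rel₂ (.var _) (.var _))) hb
  refine ⟨a, haL, fun i hi j hj => (ha _ (mul_add_lt_mul hi hj)).trans
    ⟨fun ⟨i', _, j', hj', hu, hR'⟩ => ?_, fun hR => ⟨i, hi, j, hj, rfl, hR⟩⟩⟩
  obtain ⟨rfl, rfl⟩ := mul_add_inj_of_lt hj hj' hu
  exact hR'

theorem not_injectsBelow_codeMem [h1 : Fact (ISig 1 M)] {b L K : M}
    (hb : IsCodeFrame b L (K * K)) (N : M) : ∀ a, a < L → N < K →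
      ¬InjectsBelow (fun i j => CodeMem a b (i * K + j)) (N + 1) N := by
  induction N using h1.out.induction with
  | hP =>
    refine .ofDelta0 _ <| .ball (.const _) <| .imp (.lt (.var _) (.const _)) <| .not ?_
    refine IsDelta0Rel.of_iff (.and ?_ ?_) fun v =>
      ⟨fun h => ⟨h.total, h.inj⟩, fun h => ⟨h.1, h.2⟩⟩
    all_goals
      apply_rules (maxDepth := 1000) [isDelta0Rel_codeMem, IsDelta0Rel.and, IsDelta0Rel.imp,
        IsDelta0Rel.ball, IsDelta0Rel.bex, IsDelta0Rel.eq, IsTermFun.add, IsTermFun.mul,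
        IsTermFun.var, IsTermFun.const]
  | zero =>
    intro a _ _ h
    obtain ⟨j, hj, -⟩ := h.total 0 (by simp)
    exact not_lt_zero hj
  | succ N ih =>
    intro a _ hN h
    have hNK : N < K := (lt_add_one N).trans hN
    obtain ⟨a', ha', htable⟩ := h1.out.exists_table (K := K) (R := fun i j =>
      CodeMem a b (i * K + j) ∨ CodeMem a b (i * K + N) ∧ CodeMem a b ((N + 1) * K + j))
      (.ofDelta0 _ <| by
        apply_rules (maxDepth := 1000) [isDelta0Rel_codeMem, IsDelta0Rel.or, IsDelta0Rel.and,
          IsTermFun.add, IsTermFun.mul, IsTermFun.var, IsTermFun.const]) hb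
    exact ih a' ha' hNK (h.rerouted.congr fun i hi j hj =>
      (htable i (hi.trans hN) j (hj.trans hNK)).symm)

theorem ISig.pigeonhole [Fact (ISig 1 M)] {n : ℕ} (hI : ISig n M) {R : M → M → Prop}
    (hR : IsPiRel n fun v : Fin 2 → M => R (v 0) (v 1)) (N : M) :
    ¬InjectsBelow R (N + 1) N := by
  intro h
  obtain ⟨b, L, hb⟩ := exists_isCodeFrame ((N + 1) * (N + 1))
  obtain ⟨a, ha, htable⟩ := hI.exists_table hR hb
  exact not_injectsBelow_codeMem hb N a ha (lt_add_one N) (h.congr fun i hi j hj =>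
    (htable i hi j (hj.trans (lt_add_one N))).symm)

end Pigeonhole

/-! ### From the generalized pigeonhole principle to homogeneous sets and back -/

section PigeonholeRamsey

variable {M : Type} [lang.Structure M] [Fact (PAm M)] {n : ℕ}

theorem CodesFinset.exists_seq {c x : M} {H : Set M} (hc : CodesFinset c H x) :
    ∃ s, (∀ i, i < x → ∃ z, z ∈ H ∧ SeqAt s i z) ∧
      ∀ i i' z, i < x → i' < x → SeqAt s i z → SeqAt s i' z → i = i' := by
  obtain ⟨s, -, htotal, hmono, -⟩ := hc
  refine ⟨s, htotal, fun i i' z hi hi' h h' => ?_⟩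
  rcases lt_trichotomy i i' with hlt | rfl | hlt
  · exact absurd (hmono i i' z z hlt hi' h h') (lt_irrefl z)
  · rfl
  · exact absurd (hmono i' i z z hlt hi h' h) (lt_irrefl z)

theorem CodesFinset.sigmaInjRel {c x y : M} {H : Set M} (hc : CodesFinset c H x)
    (hH : ∀ z ∈ H, z < y) (m : ℕ) :
    ∃ F : M → M → Prop, SigmaInjRel M m F x y ∧ ∀ u v, u < x → F u v → v ∈ H := by
  obtain ⟨s, htotal, hinj⟩ := hc.exists_seq
  refine ⟨SeqAt s, ⟨IsSigmaRel.isSigmaDef (.ofDelta0 m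
    (isDelta0Rel_seqAt (.const s) (.var 0) (.var 1))), fun u hu => ?_,
    fun u v v' _ h h' => h.eq h', hinj⟩, fun u v hu h => ?_⟩
  · obtain ⟨v, hv, huv⟩ := htotal u hu
    exact ⟨v, hH v hv, huv⟩
  · obtain ⟨v', hv', huv'⟩ := htotal u hu
    exact h.eq huv' ▸ hv'

theorem FRT1.fairFRT1 {m : ℕ} {k : M} (hF : FRT1 M m k) : FairFRT1 M m k := by
  intro x
  obtain ⟨y, hy⟩ := hF x
  refine ⟨y, fun C hC => ?_⟩
  obtain ⟨c, H, hc, hH, i, hi⟩ := hy C hC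
  obtain ⟨F, hF, hFH⟩ := hc.sigmaInjRel hH m
  exact ⟨F, hF, i, fun u v hu huv => hi v (hFH u v hu huv)⟩

theorem gphp_of_fairFRT1 {m : ℕ} (hF : ∀ k : M, 1 ≤ k → FairFRT1 M m k) : GPHP M m := by
  intro x
  rcases eq_zero_or_exists_add_one x with rfl | ⟨x, rfl⟩
  · refine ⟨1, fun ⟨F, _, htotal, _⟩ => ?_⟩
    obtain ⟨v, hv, -⟩ := htotal 0 zero_lt_one
    exact not_lt_zero hv
  · obtain ⟨y, hy⟩ := hF (x + 1) le_add_self 2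
    refine ⟨y, fun ⟨F, hFdef, hFtotal, hFfun, hFinj⟩ => ?_⟩
    obtain ⟨H, ⟨-, hHtotal, -, hHinj⟩, i, hi⟩ := hy F ⟨hFdef, hFtotal, hFfun⟩
    obtain ⟨v, hv, h0v⟩ := hHtotal 0 two_pos
    obtain ⟨w, hw, h1w⟩ := hHtotal 1 one_lt_two
    obtain rfl := hFinj v w i hv hw (hi 0 v two_pos h0v) (hi 1 w one_lt_two h1w)
    have h01 : (0 : M) = 1 := hHinj 0 1 v two_pos one_lt_two h0v h1w
    exact zero_ne_one h01

/-- Locate an element by the index of a sequence listing it and its position in that sequence. -/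
theorem ISig.exSigmaInj_of_cover (hI : ISig n M) {T : M → M → Prop}
    (hT : IsSigmaRel (n + 1) fun v : Fin 2 → M => T (v 0) (v 1))
    (hTfun : ∀ q s s', T q s → T q s' → s = s') {x y m : M}
    (hcover : ∀ z, z < y → ∃ q, q < m ∧ ∃ s, T q s ∧ ∃ r, r < x ∧ SeqAt s r z) :
    ExSigmaInj M (n + 1) y (m * x) := by
  obtain ⟨F, hF, hFR, hFfun, hFtotal⟩ := hI.uniformize (R := fun z p =>
    ∃ q, q < m ∧ ∃ r, r < x ∧ p = q * x + r ∧ ∃ s, T q s ∧ SeqAt s r z)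
    (.bex (.const _) <| .bex (.const _) <| .and
      (.ofDelta0 _ (.eq (.var _) (((IsTermFun.var _).mul (.const _)).add (.var _)))) <|
      .ex n <| .and (hT.rel₂ (.var _) (.var _))
        (.ofDelta0 _ (isDelta0Rel_seqAt (.var _) (.var _) (.var _))))
  refine ⟨F, hF.isSigmaDef, fun z hz => ?_, fun z p p' _ => hFfun z p p',
    fun z z' p _ _ hp hp' => ?_⟩
  · obtain ⟨q, hq, s, hs, r, hr, hrz⟩ := hcover z hz
    obtain ⟨p, hp⟩ := hFtotal z (q * x + r) ⟨q, hq, r, hr, rfl, s, hs, hrz⟩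
    obtain ⟨q', hq', r', hr', rfl, -⟩ := hFR z p hp
    exact ⟨q' * x + r', mul_add_lt_mul hq' hr', hp⟩
  · obtain ⟨q, -, r, hr, rfl, s, hs, hrz⟩ := hFR z p hp
    obtain ⟨q', -, r', hr', hqr, s', hs', hrz'⟩ := hFR z' _ hp'
    obtain ⟨rfl, rfl⟩ := mul_add_inj_of_lt hr hr' hqr
    obtain rfl := hTfun q s s' hs hs'
    exact hrz.eq hrz'

/-- Existential witnesses are bounded along a function on some fixed `[0, a)`: a constant one if
`Σ_{n+1}` collection holds, and any counterexample to collection otherwise. -/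
theorem ISig.exists_bounds (hI : ISig n M) : ∃ a : M, ∀ (y : M) (Q : M → M → Prop),
    IsSigmaRel (n + 1) (fun v : Fin 2 → M => Q (v 0) (v 1)) → (∀ z, z < y → ∃ w, Q z w) →
      ∃ f : M → M → Prop, IsSigmaRel (n + 1) (fun v : Fin 2 → M => f (v 0) (v 1)) ∧
        (∀ j v v', f j v → f j v' → v = v') ∧
        ∀ z, z < y → ∃ w, Q z w ∧ ∃ j, j < a ∧ ∃ v, f j v ∧ w < v := by
  by_cases hB : BSig (n + 1) M
  · refine ⟨1, fun y Q hQ hQy => ?_⟩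
    obtain ⟨b, hb⟩ := hB Q hQ.isSigmaDef y hQy
    refine ⟨fun _ v => v = b, .ofDelta0 _ (.eq (.var 1) (.const b)),
      fun _ v v' hv hv' => hv.trans hv'.symm, fun z hz => ?_⟩
    obtain ⟨w, hw, hQw⟩ := hb z hz
    exact ⟨w, hQw, 0, zero_lt_one, b, rfl, hw⟩
  · simp only [BSig, not_forall] at hB
    obtain ⟨R, hR, a, hRa, unbounded⟩ := hB
    obtain ⟨f, hf, hfR, hffun, hftotal⟩ := hI.uniformize hR.isSigmaRel
    refine ⟨a, fun y Q _ hQy => ⟨f, hf, hffun, fun z hz => ?_⟩⟩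
    obtain ⟨w, hw⟩ := hQy z hz
    refine ⟨w, hw, ?_⟩
    by_contra! hbound
    refine unbounded ⟨w + 1, fun j hj => ?_⟩
    obtain ⟨v, hv⟩ := hRa j hj
    obtain ⟨v', hv'⟩ := hftotal j v hv
    exact ⟨v', Order.lt_add_one_iff.2 (hbound j hj v' hv'), hfR j v' hv'⟩

variable [Fact (ISig 1 M)]

theorem ISig.exists_codesFinset_or_seq (hI : ISig n M) {X : M → Prop}
    (hX : IsPiRel n fun v : Fin 1 → M => X (v 0)) (x y : M) :
    (∃ c H, CodesFinset c H x ∧ ∀ z ∈ H, z < y ∧ X z) ∨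
      ∃ s, ∀ z, z < y → X z → ∃ r, r < x ∧ SeqAt s r z := by
  obtain ⟨b, K, hb⟩ := exists_isCodeFrame y
  obtain ⟨a, -, ha⟩ := hI.exists_code_of_pi hX hb
  refine (ArithFC.exists_codesFinset_or_seq (X := fun z => CodeMem a b z)
    (isDelta0Rel_codeMem (.const a) (.const b) (.var 0)) x y).imp ?_ ?_
  · rintro ⟨c, H, hc, hH⟩
    exact ⟨c, H, hc, fun z hz => ⟨(hH z hz).1, (ha z (hH z hz).1).1 (hH z hz).2⟩⟩
  · rintro ⟨s, hs⟩
    exact ⟨s, fun z hz hXz => hs z hz ((ha z hz).2 hXz)⟩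

/-- If no color class has `x` elements with witnesses below any of the bounds, these finitely
many approximations to the color classes cover `[0, y)` by short sequences. -/
theorem ISig.exists_homogeneous_of_bounds (hI : ISig n M) {k a x y : M}
    (hy : ¬ExSigmaInj M (n + 1) y (k * a * x)) {θ : M → M → M → Prop}
    (hθ : IsPiRel n fun v : Fin 3 → M => θ (v 0) (v 1) (v 2)) {f : M → M → Prop}
    (hf : IsSigmaRel (n + 1) fun v : Fin 2 → M => f (v 0) (v 1))
    (hffun : ∀ j v v', f j v → f j v' → v = v')
    (hbound : ∀ z, z < y → ∃ i, i < k ∧ ∃ j, j < a ∧ ∃ v, f j v ∧ ∃ w, w < v ∧ θ z i w) :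
    ∃ c H, CodesFinset c H x ∧ (∀ z ∈ H, z < y) ∧ ∃ i, ∀ z ∈ H, ∃ w, θ z i w := by
  by_contra no_homogeneous
  have hseq (i v : M) :
      ∃ s, ∀ z, z < y → (∃ w, w < v ∧ θ z i w) → ∃ r, r < x ∧ SeqAt s r z := by
    refine (hI.exists_codesFinset_or_seq (X := fun z => ∃ w, w < v ∧ θ z i w)
      (hI.bex (.const _) (hθ.rel₃ (.var _) (.const _) (.var _))) x y).resolve_left ?_
    rintro ⟨c, H, hc, hH⟩
    refine no_homogeneous ⟨c, H, hc, fun z hz => (hH z hz).1, i, fun z hz => ?_⟩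
    obtain ⟨w, -, hw⟩ := (hH z hz).2
    exact ⟨w, hw⟩
  obtain ⟨T, hT, hTR, hTfun, hTtotal⟩ := hI.uniformize (R := fun q s =>
    ∃ i, i < k ∧ ∃ j, j < a ∧ q = i * a + j ∧ ∃ v, f j v ∧
      ∀ z, z < y → (∃ w, w < v ∧ θ z i w) → ∃ r, r < x ∧ SeqAt s r z)
    (.bex (.const _) <| .bex (.const _) <| .and
      (.ofDelta0 _ (.eq (.var _) (((IsTermFun.var _).mul (.const _)).add (.var _)))) <|
      .ex n <| .and (hf.rel₂ (.var _) (.var _)) <| .succ_mono <| hI.ball (.const _) <|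
        .imp (hI.bex (.var _) (hθ.rel₃ (.var _) (.var _) (.var _)))
          (.ofDelta0 _ (.bex (.const _) (isDelta0Rel_seqAt (.var _) (.var _) (.var _)))))
  refine hy (hI.exSigmaInj_of_cover hT hTfun fun z hz => ?_)
  obtain ⟨i, hi, j, hj, v, hv, hw⟩ := hbound z hz
  obtain ⟨s, hs⟩ := hseq i v
  obtain ⟨s', hs'⟩ := hTtotal (i * a + j) s ⟨i, hi, j, hj, rfl, v, hv, hs⟩
  refine ⟨i * a + j, mul_add_lt_mul hi hj, s', hs', ?_⟩
  obtain ⟨i', -, j', hj', hij, v', hv', hcover⟩ := hTR _ _ hs'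
  obtain ⟨rfl, rfl⟩ := mul_add_inj_of_lt hj hj' hij
  obtain rfl := hffun j v v' hv hv'
  exact hcover z hz hw

theorem ISig.frt1_of_gphp (hI : ISig n M) (hG : GPHP M (n + 1)) (k : M) : FRT1 M (n + 1) k := by
  intro x
  obtain ⟨a, ha⟩ := hI.exists_bounds
  obtain ⟨y, hy⟩ := hG (k * a * x)
  refine ⟨y, fun C ⟨hCdef, hCtotal, _⟩ => ?_⟩
  obtain ⟨θ, hθ, hCθ⟩ := hI.exists_pi_matrix hCdef.isSigmaRel
  obtain ⟨f, hf, hffun, hbound⟩ := ha y (fun z w => ∃ i, i < k ∧ θ z i w)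
    (.bex (.const _) (.ofPi (hθ.rel₃ (.var _) (.var _) (.var _)))) fun z hz => by
      obtain ⟨i, hi, hC⟩ := hCtotal z hz
      obtain ⟨w, hw⟩ := (hCθ z i).1 hC
      exact ⟨w, i, hi, hw⟩
  obtain ⟨c, H, hc, hH, i, hi⟩ := hI.exists_homogeneous_of_bounds hy hθ hf hffun fun z hz => by
    obtain ⟨w, ⟨i, hi, hw⟩, j, hj, v, hv, hwv⟩ := hbound z hz
    exact ⟨i, hi, j, hj, v, hv, w, hwv, hw⟩
  exact ⟨c, H, hc, hH, i, fun z hz => (hCθ z i).2 (hi z hz)⟩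

end PigeonholeRamsey

/-! ### Greedy selection -/

section Greedy

variable {M : Type} [lang.Structure M]

/-- `z` has not been selected before step `u`. A selection process is recorded by a sequence `s`
whose entry at a step is `z + 1` if `z` is selected and `0` if nothing is. -/
def Fresh (s u z : M) : Prop := ∀ u', u' < u → ¬SeqAt s u' (z + 1)

/-- `z` is an element below `y` that is demanded at step `u` and still fresh. -/
def IsCandidate (D : M → M → Prop) (y s u z : M) : Prop := z < y ∧ D u z ∧ Fresh s u z

/-- `p` records the choice of the least candidate at step `u`, if there is one. -/
def Selects (D : M → M → Prop) (y s u p : M) : Prop :=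
  (∃ z, p = z + 1 ∧ IsLeast {z | IsCandidate D y s u z} z) ∨ p = 0 ∧ ∀ z, ¬IsCandidate D y s u z

/-- The first `U` entries of `s` record the greedy selection process for the demands `D` among
the elements below `y`. -/
def Greedy (D : M → M → Prop) (y s U : M) : Prop :=
  ∀ u, u < U → ∃ p, SeqAt s u p ∧ Selects D y s u p

variable {D D' : M → M → Prop} {y s s' u u' U U' p z : M}

theorem IsCandidate.congr (h : IsCandidate D y s u z)
    (hs : ∀ u', u' < u → ∀ p, SeqAt s u' p ↔ SeqAt s' u' p) : IsCandidate D y s' u z :=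
  ⟨h.1, h.2.1, fun u' hu' hz => h.2.2 u' hu' ((hs u' hu' _).2 hz)⟩

theorem Selects.congr (h : Selects D y s u p)
    (hs : ∀ u', u' < u → ∀ p, SeqAt s u' p ↔ SeqAt s' u' p) : Selects D y s' u p := by
  have hcand : IsCandidate D y s u = IsCandidate D y s' u := funext fun z => propext
    ⟨fun hz => hz.congr hs, fun hz => hz.congr fun u' hu' p => (hs u' hu' p).symm⟩
  rwa [Selects, hcand] at h

theorem Greedy.congr (h : Greedy D y s U) (hD : ∀ u, u < U → D u = D' u) : Greedy D' y s U := by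
  intro u hu
  obtain ⟨p, hp, hsel⟩ := h u hu
  refine ⟨p, hp, ?_⟩
  unfold Selects IsCandidate at hsel ⊢
  rwa [hD u hu] at hsel

theorem Greedy.exists_selected_or (h : Greedy D y s U) (hu : u < U) (hz : z < y) (hD : D u z) :
    (∃ z', SeqAt s u (z' + 1)) ∨ ∃ u', u' < u ∧ SeqAt s u' (z + 1) := by
  by_contra! hno
  obtain ⟨p, hp, ⟨z', rfl, -⟩ | ⟨-, hnone⟩⟩ := h u hu
  · exact hno.1 z' hp
  · exact hnone z ⟨hz, hD, hno.2⟩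

variable [Fact (PAm M)]

theorem Selects.eq {p' : M} (h : Selects D y s u p) (h' : Selects D y s u p') : p = p' := by
  rcases h with ⟨z, rfl, hz⟩ | ⟨rfl, hno⟩ <;> rcases h' with ⟨z', rfl, hz'⟩ | ⟨rfl, hno'⟩
  · rw [hz.unique hz']
  · exact absurd hz.1 (hno' z)
  · exact absurd hz'.1 (hno z')
  · rfl

theorem Greedy.isCandidate (h : Greedy D y s U) (hu : u < U) (hz : SeqAt s u (z + 1)) :
    IsCandidate D y s u z := by
  obtain ⟨p, hp, ⟨z', rfl, hz'⟩ | ⟨rfl, -⟩⟩ := h u hu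
  · obtain rfl := add_right_cancel (hz.eq hp)
    exact hz'.1
  · exact absurd (hz.eq hp) (by simp)

theorem Greedy.step_eq (h : Greedy D y s U) (hu : u < U) (hu' : u' < U)
    (hz : SeqAt s u (z + 1)) (hz' : SeqAt s u' (z + 1)) : u = u' := by
  rcases lt_trichotomy u u' with hlt | rfl | hlt
  · exact absurd hz ((h.isCandidate hu' hz').2.2 u hlt)
  · rfl
  · exact absurd hz' ((h.isCandidate hu hz).2.2 u' hlt)

theorem Greedy.seqAt [h1 : Fact (ISig 1 M)] (h : Greedy D y s U) (h' : Greedy D y s' U')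
    (hu : u < U) (hu' : u < U') (hp : SeqAt s u p) : SeqAt s' u p := by
  have agree (V : M) : ∀ u, u < V → u < U → u < U' → ∃ p, SeqAt s u p ∧ SeqAt s' u p := by
    induction V using h1.out.induction with
    | hP =>
      exact h1.out.ball (.var _) <| .imp (.ofDelta0 _ (.lt (.var _) (.const _))) <|
        .imp (.ofDelta0 _ (.lt (.var _) (.const _))) <| .ex 0 <| .ofDelta0 _ <| .and
        (isDelta0Rel_seqAt (.const _) (.var _) (.var _))
        (isDelta0Rel_seqAt (.const _) (.var _) (.var _))
    | zero => exact fun u hu => absurd hu not_lt_zero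
    | succ V ih =>
      intro u huV hu hu'
      rcases (Order.lt_add_one_iff.1 huV).lt_or_eq with huV | rfl
      · exact ih u huV hu hu'
      obtain ⟨p, hp, hsel⟩ := h u hu
      obtain ⟨p', hp', hsel'⟩ := h' u hu'
      obtain rfl : p = p' := by
        refine (hsel.congr fun v hv q => ?_).eq hsel'
        obtain ⟨r, hr, hr'⟩ := ih v hv (hv.trans hu) (hv.trans hu')
        exact ⟨fun hq => hq.eq hr ▸ hr', fun hq => hq.eq hr' ▸ hr⟩
      exact ⟨p, hp, hp'⟩
  obtain ⟨q, hq, hq'⟩ := agree (u + 1) u (lt_add_one u) hu hu'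
  exact hp.eq hq ▸ hq'

section Definability

variable {D : M → M → M → M → Prop} {k : ℕ} {c d f g h e : (Fin k → M) → M}

theorem isDelta0Rel_isCandidate
    (hD : IsDelta0Rel fun v : Fin 4 → M => D (v 0) (v 1) (v 2) (v 3))
    (hc : IsTermFun c) (hd : IsTermFun d) (hf : IsTermFun f) (hg : IsTermFun g)
    (hh : IsTermFun h) (he : IsTermFun e) :
    IsDelta0Rel fun v => IsCandidate (D (c v) (d v)) (f v) (g v) (h v) (e v) :=
  .and (.lt he hf) <| .and (hD.rel₄ hc hd hh he) <| .ball hh <| .not <|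
    isDelta0Rel_seqAt hg.comp_castSucc (.var _) (.add he.comp_castSucc (.const 1))

theorem isSigmaRel_greedy [h1 : Fact (ISig 1 M)]
    (hD : IsDelta0Rel fun v : Fin 4 → M => D (v 0) (v 1) (v 2) (v 3)) (y : M) :
    IsSigmaRel 1 fun v : Fin 4 → M => Greedy (D (v 0) (v 1)) y (v 2) (v 3) := by
  have hselects : IsDelta0Rel fun v : Fin 6 → M =>
      Selects (D (v 0) (v 1)) y (v 2) (v 4) (v 5) := by
    refine IsDelta0Rel.of_iff (R := fun v =>
      (∃ z, z < y ∧ v 5 = z + 1 ∧ IsCandidate (D (v 0) (v 1)) y (v 2) (v 4) z ∧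
        ∀ z', z' < z → ¬IsCandidate (D (v 0) (v 1)) y (v 2) (v 4) z') ∨
      v 5 = 0 ∧ ∀ z, z < y → ¬IsCandidate (D (v 0) (v 1)) y (v 2) (v 4) z) ?_ fun v =>
        or_congr ⟨?_, ?_⟩ (and_congr_right fun _ => ⟨fun h z _ => h z, fun h z hz => h z hz.1 hz⟩)
    · refine .or (.bex (.const _) <| .and (.eq (.var _) (.add (.var _) (.const _))) <| .and ?_ <|
        .ball (.var _) <| .not ?_) (.and (.eq (.var _) (.const _)) <| .ball (.const _) <| .not ?_)
      all_goals
        exact isDelta0Rel_isCandidate hD (.var _) (.var _) (.const _) (.var _) (.var _) (.var _)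
    · rintro ⟨z, hp, hz, hmin⟩
      exact ⟨z, hz.1, hp, hz, fun z' hz' hcand => hz'.not_ge (hmin hcand)⟩
    · rintro ⟨z, -, hp, hz, hmin⟩
      exact ⟨z, hp, hz, fun z' hcand => not_lt.1 fun hz' => hmin z' hz' hcand⟩
  exact h1.out.ball (.var _) <| .ex 0 <| .ofDelta0 _ <| .and
    (isDelta0Rel_seqAt (.var _) (.var _) (.var _)) hselects

theorem exists_selects [h1 : Fact (ISig 1 M)]
    (hD : IsDelta0Rel fun v : Fin 4 → M => D (v 0) (v 1) (v 2) (v 3)) (c d y s u : M) :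
    ∃ p, Selects (D c d) y s u p := by
  by_cases hex : ∃ z, IsCandidate (D c d) y s u z
  · obtain ⟨z, hz⟩ := h1.out.exists_isLeast_of_pi (P := IsCandidate (D c d) y s u)
      (.ofDelta0 _ <| isDelta0Rel_isCandidate hD (.const _) (.const _) (.const _) (.const _)
        (.const _) (.var _)) hex
    exact ⟨z + 1, .inl ⟨z, rfl, hz⟩⟩
  · exact ⟨0, .inr ⟨rfl, not_exists.1 hex⟩⟩

theorem exists_greedy [h1 : Fact (ISig 1 M)]
    (hD : IsDelta0Rel fun v : Fin 4 → M => D (v 0) (v 1) (v 2) (v 3)) (c d y U : M) :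
    ∃ s, Greedy (D c d) y s U := by
  induction U using h1.out.induction with
  | hP =>
    exact .ex 0 <| (isSigmaRel_greedy hD y).rel₄ (R := fun c d s U => Greedy (D c d) y s U)
      (.const _) (.const _) (.var _) (.var _)
  | zero => exact ⟨0, fun u hu => absurd hu not_lt_zero⟩
  | succ U ih =>
    obtain ⟨s, hs⟩ := ih
    obtain ⟨p, hp⟩ := exists_selects hD c d y s U
    obtain ⟨s', hs', hU⟩ := exists_seq_append (fun u hu => (hs u hu).imp fun p hp => hp.1) p
    have hss' {u : M} (hu : u ≤ U) (v : M) (hv : v < u) (p : M) : SeqAt s v p ↔ SeqAt s' v p :=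
      (hs' v (hv.trans_le hu) p).symm
    refine ⟨s', fun u hu => ?_⟩
    rcases (Order.lt_add_one_iff.1 hu).lt_or_eq with hu | rfl
    · obtain ⟨q, hq, hsel⟩ := hs u hu
      exact ⟨q, (hs' u hu q).2 hq, hsel.congr (hss' hu.le)⟩
    · exact ⟨p, hU, hp.congr (hss' le_rfl)⟩

end Definability

end Greedy

/-! ### From two colors to the generalized pigeonhole principle -/

section Demand

variable {M : Type} [lang.Structure M] [Fact (PAm M)]

/-- The steps `(w * K + a) * 2 + i` with `a < K` and `i < 2` are devoted to the pair `(w, a)`. They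
demand the elements of the set coded by `a` with respect to `b`, provided that `w` is least such
that `R w a`. -/
def Demand (R : M → M → Prop) (b K u z : M) : Prop :=
  ∃ w a i, a < K ∧ i < 2 ∧ u = (w * K + a) * 2 + i ∧ IsLeast {w | R w a} w ∧ CodeMem a b z

variable {R R' : M → M → Prop} {a b i K T u w y z : M}

theorem step_inj {w' a' i' : M} (ha : a < K) (hi : i < 2) (ha' : a' < K) (hi' : i' < 2)
    (h : (w * K + a) * 2 + i = (w' * K + a') * 2 + i') : w = w' ∧ a = a' ∧ i = i' := by
  obtain ⟨hwa, hi⟩ := mul_add_inj_of_lt hi hi' h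
  obtain ⟨hw, ha⟩ := mul_add_inj_of_lt ha ha' hwa
  exact ⟨hw, ha, hi⟩

theorem step_lt (hw : w < T) (ha : a < K) (hi : i < 2) : (w * K + a) * 2 + i < T * K * 2 :=
  mul_add_lt_mul (mul_add_lt_mul hw ha) hi

theorem lt_of_step_lt (h : (w * K + a) * 2 + i < T * K * 2) : w < T := by
  by_contra! hw
  refine h.not_ge ?_
  calc T * K * 2 ≤ w * K * 2 := by gcongr
    _ ≤ (w * K + a) * 2 := by gcongr; exact le_self_add
    _ ≤ (w * K + a) * 2 + i := le_self_add

theorem le_step (ha : a < K) : w ≤ (w * K + a) * 2 + i :=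
  calc w ≤ w * K := le_mul_of_one_le_right zero_le (Order.one_le_iff_pos.2 (zero_le.trans_lt ha))
    _ ≤ w * K + a := le_self_add
    _ ≤ (w * K + a) * 2 := le_mul_of_one_le_right zero_le one_lt_two.le
    _ ≤ (w * K + a) * 2 + i := le_self_add

theorem demand_step_iff (ha : a < K) (hw : IsLeast {w | R w a} w) (hi : i < 2) :
    Demand R b K ((w * K + a) * 2 + i) z ↔ CodeMem a b z := by
  refine ⟨fun ⟨w', a', i', ha', hi', hu, _, hz⟩ => ?_, fun hz => ⟨w, a, i, ha, hi, rfl, hw, hz⟩⟩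
  rwa [(step_inj ha hi ha' hi' hu).2.1]

theorem Demand.congr (h : Demand R b K u z) (hu : u < T * K * 2)
    (hR : ∀ w, w < T → ∀ a, a < K → (R w a ↔ R' w a)) : Demand R' b K u z := by
  obtain ⟨w, a, i, ha, hi, rfl, ⟨hw, hmin⟩, hz⟩ := h
  have hwT : w < T := lt_of_step_lt hu
  refine ⟨w, a, i, ha, hi, rfl, ⟨(hR w hwT a ha).1 hw, fun w' hw' => ?_⟩, hz⟩
  by_contra! hlt
  exact hlt.not_ge (hmin ((hR w' (hlt.trans hwT) a ha).2 hw'))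

theorem Greedy.demand_congr {s : M} (h : Greedy (Demand R b K) y s (T * K * 2))
    (hR : ∀ w, w < T → ∀ a, a < K → (R w a ↔ R' w a)) :
    Greedy (Demand R' b K) y s (T * K * 2) :=
  h.congr fun _ hu => funext fun _ => propext
    ⟨fun hz => hz.congr hu hR, fun hz => hz.congr hu fun w hw a ha => (hR w hw a ha).symm⟩

theorem isDelta0Rel_demand_codeMem (b K : M) : IsDelta0Rel fun v : Fin 4 → M =>
    Demand (fun w a => CodeMem (v 0) (v 1) (w * K + a)) b K (v 2) (v 3) := by
  refine IsDelta0Rel.of_iff (R := fun v => ∃ w, w ≤ v 2 ∧ ∃ a, a < K ∧ ∃ i, i < 2 ∧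
    v 2 = (w * K + a) * 2 + i ∧ (CodeMem (v 0) (v 1) (w * K + a) ∧
      ∀ w', w' < w → ¬CodeMem (v 0) (v 1) (w' * K + a)) ∧ CodeMem a b (v 3)) ?_ fun v =>
      ⟨?_, ?_⟩
  · refine .bex_le (.var _) <| .bex (.const _) <| .bex (.const _) <| .and ?_ <| .and (.and ?_ <|
      .ball (.var _) <| .not ?_) <| isDelta0Rel_codeMem (.var _) (.const _) (.var _)
    all_goals
      apply_rules (maxDepth := 1000) [isDelta0Rel_codeMem, IsDelta0Rel.eq, IsTermFun.add,
        IsTermFun.mul, IsTermFun.var, IsTermFun.const]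
  · rintro ⟨w, a, i, ha, hi, hu, ⟨hw, hmin⟩, hz⟩
    exact ⟨w, hu ▸ le_step ha, a, ha, i, hi, hu,
      ⟨hw, fun w' hw' hcode => hw'.not_ge (hmin hcode)⟩, hz⟩
  · rintro ⟨w, -, a, ha, i, hi, hu, ⟨hw, hmin⟩, hz⟩
    exact ⟨w, a, i, ha, hi, hu, ⟨hw, fun w' hcode => not_lt.1 fun hw' => hmin w' hw' hcode⟩, hz⟩

variable [Fact (ISig 1 M)] {n : ℕ}

theorem ISig.exists_codeMem_iff (hI : ISig n M)
    (hR : IsPiRel n fun v : Fin 2 → M => R (v 0) (v 1)) (T K : M) :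
    ∃ c d, ∀ w, w < T → ∀ a, a < K → (CodeMem c d (w * K + a) ↔ R w a) := by
  obtain ⟨d, L, hd⟩ := exists_isCodeFrame (T * K)
  obtain ⟨c, -, hc⟩ := hI.exists_table hR hd
  exact ⟨c, d, hc⟩

theorem ISig.exists_greedy_demand (hI : ISig n M)
    (hR : IsPiRel n fun v : Fin 2 → M => R (v 0) (v 1)) (b K y T : M) :
    ∃ s, Greedy (Demand R b K) y s (T * K * 2) := by
  obtain ⟨c, d, hcd⟩ := hI.exists_codeMem_iff hR T K
  obtain ⟨s, hs⟩ := exists_greedy (D := fun c d => Demand (fun w a => CodeMem c d (w * K + a)) b K)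
    (isDelta0Rel_demand_codeMem b K) c d y (T * K * 2)
  exact ⟨s, hs.demand_congr hcd⟩

theorem ISig.isSigmaRel_greedy_demand (hI : ISig n M)
    (hR : IsPiRel n fun v : Fin 2 → M => R (v 0) (v 1)) (b K y : M) :
    IsSigmaRel (n + 1) fun v : Fin 2 → M => Greedy (Demand R b K) y (v 0) (v 1 * K * 2) := by
  have hcode : IsDelta0Rel fun v : Fin 6 → M => CodeMem (v 2) (v 3) (v 4 * K + v 5) :=
    isDelta0Rel_codeMem (.var _) (.var _) (.add (.mul (.var _) (.const _)) (.var _))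
  have htable : IsSigmaRel (n + 1) fun v : Fin 4 → M =>
      (∀ w, w < v 1 → ∀ a, a < K → CodeMem (v 2) (v 3) (w * K + a) → R w a) ∧
      ∀ w, w < v 1 → ∀ a, a < K → R w a → CodeMem (v 2) (v 3) (w * K + a) :=
    .and
      (.ofPi <| .ball (.var _) <| .ball (.const _) <| .imp (.ofDelta0 n hcode) <|
        hR.rel₂ (.var _) (.var _))
      (.succ_mono <| hI.ball (.var _) <| hI.ball (.const _) <| .imp (hR.rel₂ (.var _) (.var _)) <|
        .ofDelta0 n hcode)
  have hgreedy : IsSigmaRel (n + 1) fun v : Fin 4 → M =>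
      Greedy (Demand (fun w a => CodeMem (v 2) (v 3) (w * K + a)) b K) y (v 0) (v 1 * K * 2) :=
    ((isSigmaRel_greedy (D := fun c d => Demand (fun w a => CodeMem c d (w * K + a)) b K)
      (isDelta0Rel_demand_codeMem b K) y).rel₄
      (R := fun c d => Greedy (Demand (fun w a => CodeMem c d (w * K + a)) b K) y)
      (.var _) (.var _) (.var _) (.mul (.mul (.var _) (.const _)) (.const _))).mono le_add_self
  refine IsSigmaRel.of_iff (R := fun v => ∃ c d,
    ((∀ w, w < v 1 → ∀ a, a < K → CodeMem c d (w * K + a) → R w a) ∧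
      ∀ w, w < v 1 → ∀ a, a < K → R w a → CodeMem c d (w * K + a)) ∧
    Greedy (Demand (fun w a => CodeMem c d (w * K + a)) b K) y (v 0) (v 1 * K * 2))
    (.ex n (.ex n (htable.and hgreedy))) fun v => ⟨fun h => ?_, ?_⟩
  · obtain ⟨c, d, hcd⟩ := hI.exists_codeMem_iff hR (v 1) K
    exact ⟨c, d, ⟨fun w hw a ha => (hcd w hw a ha).1, fun w hw a ha => (hcd w hw a ha).2⟩,
      h.demand_congr fun w hw a ha => (hcd w hw a ha).symm⟩
  · rintro ⟨c, d, ⟨hsound, hcomplete⟩, h⟩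
    exact h.demand_congr fun w hw a ha => ⟨hsound w hw a ha, hcomplete w hw a ha⟩

end Demand

section Selection

variable {M : Type} [lang.Structure M] [Fact (PAm M)]

/-- `z` is selected at step `u` of the greedy selection process for `Demand R b K`. -/
def SelectedAt (R : M → M → Prop) (b K y u z : M) : Prop :=
  ∃ T s, Greedy (Demand R b K) y s (T * K * 2) ∧ u < T * K * 2 ∧ SeqAt s u (z + 1)

/-- The color of an element is the parity of the step at which it is selected. -/
def SelectionColor (R : M → M → Prop) (b K y z i : M) : Prop :=
  i < 2 ∧ ∃ t, SelectedAt R b K y (t * 2 + i) z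

variable {R : M → M → Prop} {a b i K s T u u' w y z : M}

theorem Demand.isLeast (h : Demand R b K ((w * K + a) * 2 + i) z) (ha : a < K) (hi : i < 2) :
    IsLeast {w | R w a} w := by
  obtain ⟨w', a', i', ha', hi', hu, hw, -⟩ := h
  obtain ⟨rfl, rfl, -⟩ := step_inj ha hi ha' hi' hu
  exact hw

theorem SelectedAt.demand (h : SelectedAt R b K y u z) : Demand R b K u z := by
  obtain ⟨T, s, hs, hu, hz⟩ := h
  exact (hs.isCandidate hu hz).2.1

theorem SelectedAt.exists_selectionColor (h : SelectedAt R b K y u z) :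
    ∃ i, SelectionColor R b K y z i := by
  obtain ⟨w, a, i, -, hi, rfl, -⟩ := h.demand
  exact ⟨i, hi, w * K + a, h⟩

variable [Fact (ISig 1 M)]

theorem SelectedAt.seqAt (h : SelectedAt R b K y u z) (hs : Greedy (Demand R b K) y s (T * K * 2))
    (hu : u < T * K * 2) : SeqAt s u (z + 1) := by
  obtain ⟨T', s', hs', hu', hz⟩ := h
  exact hs'.seqAt hs hu' hu hz

theorem SelectedAt.step_eq (h : SelectedAt R b K y u z) (h' : SelectedAt R b K y u' z) :
    u = u' := by
  wlog hle : u ≤ u' generalizing u u'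
  · exact (this h' h (le_of_not_ge hle)).symm
  obtain ⟨T, s, hs, hu', hz'⟩ := h'
  have hu : u < T * K * 2 := hle.trans_lt hu'
  exact hs.step_eq hu hu' (h.seqAt hs hu) hz'

theorem SelectionColor.eq {i' : M} (h : SelectionColor R b K y z i)
    (h' : SelectionColor R b K y z i') : i = i' := by
  obtain ⟨hi, t, ht⟩ := h
  obtain ⟨hi', t', ht'⟩ := h'
  exact (mul_add_inj_of_lt hi hi' (ht.step_eq ht')).2

variable {n : ℕ}

theorem ISig.isSigmaRel_selectionColor (hI : ISig n M)
    (hR : IsPiRel n fun v : Fin 2 → M => R (v 0) (v 1)) (b K y : M) :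
    IsSigmaRel (n + 1) fun v : Fin 2 → M => SelectionColor R b K y (v 0) (v 1) := by
  refine .and (.ofDelta0 _ (.lt (.var _) (.const _))) <| .ex n <| .ex n <| .ex n <| .and
    ((hI.isSigmaRel_greedy_demand hR b K y).rel₂
      (R := fun s T => Greedy (Demand R b K) y s (T * K * 2)) (.var 4) (.var 3)) <|
    .ofDelta0 _ <| .and (.lt ?_ ?_) (isDelta0Rel_seqAt (.var _) ?_ ?_)
  all_goals
    apply_rules (maxDepth := 1000) [IsTermFun.add, IsTermFun.mul, IsTermFun.var, IsTermFun.const]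

theorem ISig.exists_selectedAt_or (hI : ISig n M)
    (hR : IsPiRel n fun v : Fin 2 → M => R (v 0) (v 1)) (ha : a < K)
    (hw : IsLeast {w | R w a} w) (hi : i < 2) (hz : z < y) (hza : CodeMem a b z) :
    (∃ z', z' < y ∧ CodeMem a b z' ∧ SelectedAt R b K y ((w * K + a) * 2 + i) z') ∨
      ∃ u', u' < (w * K + a) * 2 + i ∧ SelectedAt R b K y u' z := by
  obtain ⟨s, hs⟩ := hI.exists_greedy_demand hR b K y (w + 1)
  have hu : (w * K + a) * 2 + i < (w + 1) * K * 2 := step_lt (lt_add_one w) ha hi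
  refine (hs.exists_selected_or hu hz ((demand_step_iff ha hw hi).2 hza)).imp ?_ ?_
  · rintro ⟨z', hz'⟩
    obtain ⟨hz'y, hdemand, -⟩ := hs.isCandidate hu hz'
    exact ⟨z', hz'y, (demand_step_iff ha hw hi).1 hdemand, w + 1, s, hs, hu, hz'⟩
  · rintro ⟨u', hu', hz'⟩
    exact ⟨u', hu', w + 1, s, hs, hu'.trans hu, hz'⟩

end Selection

section Counting

variable {M : Type} [lang.Structure M]

/-- `w` certifies that `a` has a label below `x`, where `θ a e w` says that `w` certifies the
label `e` of `a`. -/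
def Certifies (θ : M → M → M → Prop) (x w a : M) : Prop := ∃ e, e < x ∧ θ a e w

variable [Fact (PAm M)]

/-- The step `u = (w * K + a) * 2 + i` with `w < T` carries the label `j < 2 * x` if `w` certifies
the label `e` of `a`, where `j` is the pair of `i` and `e`. -/
def HasLabel (θ : M → M → M → Prop) (T K x u j : M) : Prop :=
  ∃ w, w < T ∧ ∃ a, a < K ∧ ∃ i, i < 2 ∧ ∃ e, e < x ∧
    u = (w * K + a) * 2 + i ∧ j = i * x + e ∧ θ a e w

variable {θ : M → M → M → Prop} {b i j K T u u' x y z z' : M} {n : ℕ}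

theorem Demand.exists_hasLabel (h : Demand (Certifies θ x) b K u z) (hu : u < T * K * 2) :
    ∃ j, j < 2 * x ∧ HasLabel θ T K x u j := by
  obtain ⟨w, a, i, ha, hi, rfl, ⟨⟨e, he, hθ⟩, -⟩, -⟩ := h
  exact ⟨i * x + e, mul_add_lt_mul hi he, w, lt_of_step_lt hu, a, ha, i, hi, e, he, rfl, rfl, hθ⟩

theorem HasLabel.step_eq (hinj : ∀ a a' e w w', a < K → a' < K → θ a e w → θ a' e w' → a = a')
    (h : HasLabel θ T K x u j) (h' : HasLabel θ T K x u' j)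
    (hu : Demand (Certifies θ x) b K u z) (hu' : Demand (Certifies θ x) b K u' z') : u = u' := by
  obtain ⟨w, -, a, ha, i, hi, e, he, rfl, rfl, hθ⟩ := h
  obtain ⟨w', -, a', ha', i', hi', e', he', rfl, hj, hθ'⟩ := h'
  obtain ⟨rfl, rfl⟩ := mul_add_inj_of_lt he he' hj
  obtain rfl := hinj a a' e w w' ha ha' hθ hθ'
  rw [(hu.isLeast ha hi).unique (hu'.isLeast ha hi)]

theorem ISig.isPiRel_certifies (hI : ISig n M)
    (hθ : IsPiRel n fun v : Fin 3 → M => θ (v 0) (v 1) (v 2)) (x : M) :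
    IsPiRel n fun v : Fin 2 → M => Certifies θ x (v 0) (v 1) :=
  hI.bex (.const _) (hθ.rel₃ (.var _) (.var _) (.var _))

theorem ISig.isPiRel_hasLabel (hI : ISig n M)
    (hθ : IsPiRel n fun v : Fin 3 → M => θ (v 0) (v 1) (v 2)) (T K x : M) :
    IsPiRel n fun v : Fin 2 → M => HasLabel θ T K x (v 0) (v 1) := by
  refine hI.bex (.const _) <| hI.bex (.const _) <| hI.bex (.const _) <| hI.bex (.const _) <|
    .and (.ofDelta0 _ (.eq (.var _) ?_)) <| .and (.ofDelta0 _ (.eq (.var _) ?_)) <|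
      hθ.rel₃ (.var _) (.var _) (.var _)
  all_goals
    apply_rules (maxDepth := 1000) [IsTermFun.add, IsTermFun.mul, IsTermFun.var, IsTermFun.const]

variable [Fact (ISig 1 M)]

/-- The steps at which something is selected carry distinct labels, of which there are `2 * x`. -/
theorem ISig.exists_not_selectedAt (hI : ISig n M)
    (hθ : IsPiRel n fun v : Fin 3 → M => θ (v 0) (v 1) (v 2))
    (hinj : ∀ a a' e w w', a < K → a' < K → θ a e w → θ a' e w' → a = a')
    {c : M} {H : Set M} (hc : CodesFinset c H (2 * x + 1)) (b y T : M) :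
    ∃ z, z ∈ H ∧ ∀ u, u < T * K * 2 → ¬SelectedAt (Certifies θ x) b K y u z := by
  by_contra! hall
  obtain ⟨s, hs⟩ := hI.exists_greedy_demand (hI.isPiRel_certifies hθ x) b K y T
  obtain ⟨q, hq, hqinj⟩ := hc.exists_seq
  refine hI.pigeonhole (R := fun i j => ∃ z, z < y ∧ SeqAt q i z ∧
    ∃ u, u < T * K * 2 ∧ SeqAt s u (z + 1) ∧ HasLabel θ T K x u j) ?_ (2 * x) ⟨?_, ?_⟩
  · exact hI.bex (.const _) <| .and
      (.ofDelta0 _ (isDelta0Rel_seqAt (.const _) (.var _) (.var _))) <| hI.bex (.const _) <| .and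
      (.ofDelta0 _ (isDelta0Rel_seqAt (.const _) (.var _) (.add (.var _) (.const _))))
      ((hI.isPiRel_hasLabel hθ T K x).rel₂ (.var _) (.var _))
  · intro i hi
    obtain ⟨z, hzH, hz⟩ := hq i hi
    obtain ⟨u, hu, hsel⟩ := hall z hzH
    have hsz : SeqAt s u (z + 1) := hsel.seqAt hs hu
    obtain ⟨j, hj, hlabel⟩ := hsel.demand.exists_hasLabel hu
    exact ⟨j, hj, z, (hs.isCandidate hu hsz).1, hz, u, hu, hsz, hlabel⟩
  · rintro j - i hi i' hi' ⟨z, -, hz, u, hu, hsz, hlabel⟩ ⟨z', -, hz', u', hu', hsz', hlabel'⟩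
    obtain rfl : u = u' := hlabel.step_eq hinj hlabel' (hs.isCandidate hu hsz).2.1
      (hs.isCandidate hu' hsz').2.1
    obtain rfl : z = z' := add_right_cancel (hsz.eq hsz')
    exact hqinj i i' z hi hi' hz hz'

end Counting

section TwoColors

variable {M : Type} [lang.Structure M] [Fact (PAm M)] [h1 : Fact (ISig 1 M)] {n : ℕ}

theorem CodesFinset.exists_code {c x : M} {H : Set M} (hc : CodesFinset c H x) {b K y : M}
    (hb : IsCodeFrame b K y) : ∃ a, a < K ∧ ∀ z, z < y → (CodeMem a b z ↔ z ∈ H) := by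
  obtain ⟨s, -, -, -, hmem⟩ := hc
  obtain ⟨a, ha, hcode⟩ := h1.out.exists_code_of_sigma (X := fun z => ∃ i, i < x ∧ SeqAt s i z)
    (.ofDelta0 _ <| .bex (.const _) <| isDelta0Rel_seqAt (.const _) (.var _) (.var _)) hb
  exact ⟨a, ha, fun z hz => (hcode z hz).trans (hmem z).symm⟩

/-- The step demanding an element of `H` in color `i` comes too early for all of `H` to have been
selected before it. -/
theorem ISig.exists_selectionColor_mem (hI : ISig n M) {θ : M → M → M → Prop}
    (hθ : IsPiRel n fun v : Fin 3 → M => θ (v 0) (v 1) (v 2)) {b K x y : M}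
    (hb : IsCodeFrame b K y)
    (htotal : ∀ a, a < K → ∃ w, Certifies θ x w a)
    (hinj : ∀ a a' e w w', a < K → a' < K → θ a e w → θ a' e w' → a = a')
    {c : M} {H : Set M} (hc : CodesFinset c H (2 * x + 1)) (hH : ∀ z ∈ H, z < y)
    {i : M} (hi : i < 2) : ∃ z, z ∈ H ∧ SelectionColor (Certifies θ x) b K y z i := by
  obtain ⟨a, ha, hcode⟩ := hc.exists_code hb
  have hR := hI.isPiRel_certifies hθ x
  obtain ⟨w, hw⟩ := hI.exists_isLeast_of_pi (P := fun w => Certifies θ x w a)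
    (hR.rel₂ (.var _) (.const _)) (htotal a ha)
  obtain ⟨z, hzH, hz⟩ := hI.exists_not_selectedAt hθ hinj hc b y (w + 1)
  have hzy : z < y := hH z hzH
  rcases hI.exists_selectedAt_or hR ha hw hi hzy ((hcode z hzy).2 hzH) with
    ⟨z', hz'y, hz'a, hz'⟩ | ⟨u, hu, hsel⟩
  · exact ⟨z', (hcode z' hz'y).1 hz'a, hi, w * K + a, hz'⟩
  · exact absurd hsel (hz u (hu.trans (step_lt (lt_add_one w) ha hi)))

theorem ISig.exists_selectionColor (hI : ISig n M) {R : M → M → Prop}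
    (hR : IsPiRel n fun v : Fin 2 → M => R (v 0) (v 1)) {b K y : M} (hb : IsCodeFrame b K y)
    (htotal : ∀ a, a < K → ∃ w, R w a) {z : M} (hz : z < y) :
    ∃ i, SelectionColor R b K y z i := by
  obtain ⟨a, ha, hcode⟩ := hI.exists_code_of_sigma (X := fun z' => z' = z)
    (.ofDelta0 _ (.eq (.var _) (.const _))) hb
  obtain ⟨w, hw⟩ := hI.exists_isLeast_of_pi (P := fun w => R w a)
    (hR.rel₂ (.var _) (.const _)) (htotal a ha)
  rcases hI.exists_selectedAt_or hR ha hw two_pos hz ((hcode z hz).2 rfl) with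
    ⟨z', hz'y, hz'a, hsel⟩ | ⟨u, -, hsel⟩
  · exact (hcode z' hz'y).1 hz'a ▸ hsel.exists_selectionColor
  · exact hsel.exists_selectionColor

theorem ISig.exists_isColoring1_of_exSigmaInj (hI : ISig n M) {b K x y : M}
    (hb : IsCodeFrame b K y) (hF : ExSigmaInj M (n + 1) K x) :
    ∃ C, IsColoring1 M (n + 1) y 2 C ∧ ∀ c H, CodesFinset c H (2 * x + 1) →
      (∀ z ∈ H, z < y) → ∀ i, i < 2 → ∃ z, z ∈ H ∧ C z i := by
  obtain ⟨F, hFdef, hFtotal, -, hFinj⟩ := hF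
  obtain ⟨θ, hθ, hFθ⟩ := hI.exists_pi_matrix hFdef.isSigmaRel
  have hR := hI.isPiRel_certifies hθ x
  have htotal (a : M) (ha : a < K) : ∃ w, Certifies θ x w a := by
    obtain ⟨e, he, hFe⟩ := hFtotal a ha
    obtain ⟨w, hw⟩ := (hFθ a e).1 hFe
    exact ⟨w, e, he, hw⟩
  have hinj (a a' e w w' : M) (ha : a < K) (ha' : a' < K) (h : θ a e w) (h' : θ a' e w') :
      a = a' := hFinj a a' e ha ha' ((hFθ a e).2 ⟨w, h⟩) ((hFθ a' e).2 ⟨w', h'⟩)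
  refine ⟨SelectionColor (Certifies θ x) b K y,
    ⟨(hI.isSigmaRel_selectionColor hR b K y).isSigmaDef, fun z hz => ?_,
      fun z i i' _ h h' => h.eq h'⟩,
    fun c H hc hH i hi => hI.exists_selectionColor_mem hθ hb htotal hinj hc hH hi⟩
  obtain ⟨i, hi⟩ := hI.exists_selectionColor hR hb htotal hz
  exact ⟨i, hi.1, hi⟩

theorem ISig.gphp_of_frt1_two (hI : ISig n M) (hF : FRT1 M (n + 1) 2) : GPHP M (n + 1) := by
  intro x
  by_contra! hinj
  obtain ⟨y, hy⟩ := hF (2 * x + 1)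
  obtain ⟨b, K, hb⟩ := exists_isCodeFrame y
  obtain ⟨C, hC, hcolors⟩ := hI.exists_isColoring1_of_exSigmaInj hb (hinj K)
  obtain ⟨c, H, hc, hH, i, hi⟩ := hy C hC
  have color_eq (j : M) (hj : j < 2) : j = i := by
    obtain ⟨z, hz, hzj⟩ := hcolors c H hc hH j hj
    exact hC.2.2 z j i (hH z hz) hzj (hi z hz)
  exact zero_ne_one ((color_eq 0 two_pos).trans (color_eq 1 one_lt_two).symm)

end TwoColors

/-- For `n ≥ 1`, over PA⁻ + IΣn the following are pairwise equivalent: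
GPHP(Σ_{n+1}), FRT¹(Σ_{n+1}), fairFRT¹(Σ_{n+1}), FRT¹₂(Σ_{n+1}). -/
theorem statement_7 (n : ℕ) (hn : 1 ≤ n) (M : Type) [lang.Structure M]
    (hPA : PAm M) (hI : ISig n M) :
    (GPHP M (n + 1) ↔ ∀ k : M, (1 : M) ≤ k → FRT1 M (n + 1) k) ∧
      ((∀ k : M, (1 : M) ≤ k → FRT1 M (n + 1) k) ↔
        ∀ k : M, (1 : M) ≤ k → FairFRT1 M (n + 1) k) ∧
      ((∀ k : M, (1 : M) ≤ k → FairFRT1 M (n + 1) k) ↔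
        FRT1 M (n + 1) ((1 : M) + 1)) := by
  have : Fact (PAm M) := ⟨hPA⟩
  have : Fact (ISig 1 M) := ⟨hI.mono hn⟩
  have frt1_of_gphp (hG : GPHP M (n + 1)) (k : M) : FRT1 M (n + 1) k := hI.frt1_of_gphp hG k
  have fair_of_gphp (hG : GPHP M (n + 1)) (k : M) (_ : 1 ≤ k) : FairFRT1 M (n + 1) k :=
    (frt1_of_gphp hG k).fairFRT1
  have gphp_of_two (hF : FRT1 M (n + 1) (1 + 1)) : GPHP M (n + 1) :=
    hI.gphp_of_frt1_two (one_add_one_eq_two (R := M) ▸ hF)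
  refine ⟨⟨fun hG k _ => frt1_of_gphp hG k, fun hF => ?_⟩,
    ⟨fun hF k hk => (hF k hk).fairFRT1, fun hF k _ => ?_⟩,
    ⟨fun hF => ?_, fun hF => fair_of_gphp (gphp_of_two hF)⟩⟩
  · exact gphp_of_fairFRT1 fun k hk => (hF k hk).fairFRT1
  · exact frt1_of_gphp (gphp_of_fairFRT1 hF) k
  · exact frt1_of_gphp (gphp_of_fairFRT1 hF) _

end ArithFC
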